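/- arXiv:1803.03783 — 3 statements merged into one kernel-verified Lean document; each statement's English description precedes it below -/
import Mathlib

section
/- Let α > 0, β > 0, ρ > 0 and 0 < a. For every continuous function u on [a, ∞) and every t ≥ a, the Katugampola fractional integrals satisfy the semigroup property I_{a+}^{α,ρ} ( I_{a+}^{β,ρ} u )(t) = I_{a+}^{α+β,ρ} u(t). -/
open MeasureTheory Real Set

/-- The Katugampola fractional integral
`I_{a+}^{α,ρ} u(t) = (ρ^{1-α}/Γ(α)) ∫_a^t s^{ρ-1} u(s) / (t^ρ - s^ρ)^{1-α} ds`. -/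
noncomputable def katugampolaIntegral (α ρ a : ℝ) (u : ℝ → ℝ) (t : ℝ) : ℝ :=
  ρ ^ (1 - α) / Real.Gamma α *
    ∫ s in a..t, s ^ (ρ - 1) * u s / (t ^ ρ - s ^ ρ) ^ (1 - α)

theorem integral_rpow_mul_sub_rpow {α β L : ℝ} (hα : 0 < α) (hβ : 0 < β) (hL : 0 < L) :
    ∫ x in (0 : ℝ)..L, x ^ (α - 1) * (L - x) ^ (β - 1)
      = L ^ (α + β - 1) * ProbabilityTheory.beta α β := by
  have hbeta : (ProbabilityTheory.beta α β : ℂ) = Complex.betaIntegral α β := by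
    rw [Complex.betaIntegral_eq_Gamma_mul_div _ _ (by simpa) (by simpa)]
    simp [ProbabilityTheory.beta, ← Complex.Gamma_ofReal]
  apply Complex.ofReal_injective
  rw [Complex.ofReal_mul, hbeta, Complex.ofReal_cpow hL.le]
  push_cast
  rw [← Complex.betaIntegral_scaled _ _ hL, ← intervalIntegral.integral_ofReal]
  refine intervalIntegral.integral_congr fun x hx => ?_
  rw [uIcc_of_le hL.le] at hx
  simp only [Complex.ofReal_mul, Complex.ofReal_cpow hx.1, Complex.ofReal_cpow (sub_nonneg.2 hx.2)]
  push_cast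
  rfl

theorem integral_Ioo_sub_rpow_mul_sub_rpow {α β y T : ℝ} (hα : 0 < α) (hβ : 0 < β) (hy : y < T) :
    ∫ x in Ioo y T, (T - x) ^ (α - 1) * (x - y) ^ (β - 1)
      = (T - y) ^ (α + β - 1) * ProbabilityTheory.beta α β := by
  rw [← integral_Ioc_eq_integral_Ioo, ← intervalIntegral.integral_of_le hy.le,
    ← integral_rpow_mul_sub_rpow hα hβ (sub_pos.2 hy)]
  have h := intervalIntegral.integral_comp_sub_left (a := y) (b := T)
    (fun x => x ^ (α - 1) * ((T - y) - x) ^ (β - 1)) T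
  simpa using h

theorem integrableOn_sub_rpow_mul_sub_rpow {α β y T : ℝ} (hα : 0 < α) (hβ : 0 < β) (hy : y < T) :
    IntegrableOn (fun x => (T - x) ^ (α - 1) * (x - y) ^ (β - 1)) (Ioo y T) := by
  refine Integrable.of_integral_ne_zero ?_
  rw [integral_Ioo_sub_rpow_mul_sub_rpow hα hβ hy]
  exact (mul_pos (rpow_pos_of_pos (sub_pos.2 hy) _) (ProbabilityTheory.beta_pos hα hβ)).ne'

theorem integrableOn_Ioo_sub_rpow {γ A T : ℝ} (hγ : 0 < γ) :
    IntegrableOn (fun y => (T - y) ^ (γ - 1)) (Ioo A T) := by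
  rcases le_or_gt T A with h | h
  · simp [Ioo_eq_empty h.not_gt]
  · simpa using integrableOn_sub_rpow_mul_sub_rpow hγ one_pos h

/-- The kernel of the iterated Riemann–Liouville integral, cut off to the triangle `y < x`. -/
noncomputable def triangleKernel (α β T : ℝ) (v : ℝ → ℝ) (x y : ℝ) : ℝ :=
  (Ioi y).indicator (fun x => (T - x) ^ (α - 1) * (x - y) ^ (β - 1)) x * v y

theorem integral_triangleKernel_right {α β A T x : ℝ} {v : ℝ → ℝ} (hx : x < T) :
    ∫ y in Ioo A T, triangleKernel α β T v x y
      = (T - x) ^ (α - 1) * ∫ y in Ioo A x, (x - y) ^ (β - 1) * v y := by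
  have h : ∀ y, triangleKernel α β T v x y
      = (Iio x).indicator (fun y => (T - x) ^ (α - 1) * ((x - y) ^ (β - 1) * v y)) y := by
    intro y
    by_cases hyx : y < x <;> simp [triangleKernel, hyx, mul_assoc]
  simp_rw [h]
  rw [setIntegral_indicator measurableSet_Iio, Ioo_inter_Iio, min_eq_right hx.le,
    integral_const_mul]

theorem setIntegral_indicator_kernel {α β A T y : ℝ} (hα : 0 < α) (hβ : 0 < β)
    (hy : y ∈ Ioo A T) :
    ∫ x in Ioo A T, (Ioi y).indicator (fun x => (T - x) ^ (α - 1) * (x - y) ^ (β - 1)) x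
      = (T - y) ^ (α + β - 1) * ProbabilityTheory.beta α β := by
  rw [setIntegral_indicator measurableSet_Ioi, Ioo_inter_Ioi, max_eq_right hy.1.le,
    integral_Ioo_sub_rpow_mul_sub_rpow hα hβ hy.2]

theorem integrable_triangleKernel {α β A T : ℝ} {v : ℝ → ℝ} (hα : 0 < α) (hβ : 0 < β)
    (hv : ContinuousOn v (Icc A T)) :
    Integrable (Function.uncurry (triangleKernel α β T v))
      ((volume.restrict (Ioo A T)).prod (volume.restrict (Ioo A T))) := by
  have hvm : AEStronglyMeasurable v (volume.restrict (Ioo A T)) :=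
    (hv.mono Ioo_subset_Icc_self).aestronglyMeasurable measurableSet_Ioo
  have hm : AEStronglyMeasurable (Function.uncurry (triangleKernel α β T v))
      ((volume.restrict (Ioo A T)).prod (volume.restrict (Ioo A T))) := by
    have hk : Measurable ({p : ℝ × ℝ | p.2 < p.1}.indicator
        (fun p : ℝ × ℝ => (T - p.1) ^ (α - 1) * (p.1 - p.2) ^ (β - 1))) :=
      Measurable.indicator (by fun_prop) (measurableSet_lt measurable_snd measurable_fst)
    exact hk.aestronglyMeasurable.mul hvm.comp_snd
  refine (integrable_prod_iff' hm).2 ⟨?_, ?_⟩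
  · refine (ae_restrict_iff' measurableSet_Ioo).2 (ae_of_all _ fun y hy => ?_)
    refine Integrable.mul_const ?_ (v y)
    change Integrable ((Ioi y).indicator fun x => (T - x) ^ (α - 1) * (x - y) ^ (β - 1)) _
    rw [integrable_indicator_iff measurableSet_Ioi, IntegrableOn,
      Measure.restrict_restrict measurableSet_Ioi, inter_comm, Ioo_inter_Ioi, max_eq_right hy.1.le]
    exact integrableOn_sub_rpow_mul_sub_rpow hα hβ hy.2
  · have hint : IntegrableOn
        (fun y => (T - y) ^ (α + β - 1) * ProbabilityTheory.beta α β * ‖v y‖) (Ioo A T) := by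
      obtain ⟨M, hM⟩ := isCompact_Icc.exists_bound_of_continuousOn hv
      refine Integrable.mul_bdd (c := M)
        ((integrableOn_Ioo_sub_rpow (add_pos hα hβ)).mul_const _) hvm.norm ?_
      refine (ae_restrict_iff' measurableSet_Ioo).2 (ae_of_all _ fun y hy => ?_)
      simpa using hM y (Ioo_subset_Icc_self hy)
    refine IntegrableOn.congr_fun hint (fun y hy => ?_) measurableSet_Ioo
    simp only [Function.uncurry, triangleKernel, norm_mul]
    rw [integral_mul_const, ← setIntegral_indicator_kernel hα hβ hy]
    congr 1
    refine setIntegral_congr_fun measurableSet_Ioo fun x hx => ?_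
    refine (Real.norm_of_nonneg (indicator_apply_nonneg fun hxy => ?_)).symm
    exact mul_nonneg (rpow_nonneg (sub_nonneg.2 hx.2.le) _)
      (rpow_nonneg (sub_nonneg.2 (mem_Ioi.1 hxy).le) _)

/-- Semigroup property of the (unnormalized) Riemann–Liouville integral. -/
theorem riemannLiouville_semigroup {α β A T : ℝ} {v : ℝ → ℝ} (hα : 0 < α) (hβ : 0 < β)
    (hv : ContinuousOn v (Icc A T)) :
    ∫ x in Ioo A T, (T - x) ^ (α - 1) * ∫ y in Ioo A x, (x - y) ^ (β - 1) * v y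
      = ProbabilityTheory.beta α β * ∫ y in Ioo A T, (T - y) ^ (α + β - 1) * v y := by
  rw [← integral_const_mul]
  calc _ = ∫ x in Ioo A T, ∫ y in Ioo A T, triangleKernel α β T v x y :=
        setIntegral_congr_fun measurableSet_Ioo fun x hx =>
          (integral_triangleKernel_right hx.2).symm
    _ = ∫ y in Ioo A T, ∫ x in Ioo A T, triangleKernel α β T v x y :=
        integral_integral_swap (integrable_triangleKernel hα hβ hv)
    _ = _ := by
        refine setIntegral_congr_fun measurableSet_Ioo fun y hy => ?_
        simp only [triangleKernel]
        rw [integral_mul_const, setIntegral_indicator_kernel hα hβ hy]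
        ring

/-- The Katugampola integral is a Riemann–Liouville integral in the variable `x = s ^ ρ`. -/
theorem katugampolaIntegral_eq_riemannLiouville {α ρ a t : ℝ} (hρ : 0 < ρ) (ha : 0 < a)
    (ht : a ≤ t) (u : ℝ → ℝ) :
    katugampolaIntegral α ρ a u t = ρ ^ (-α) / Real.Gamma α *
      ∫ x in Ioo (a ^ ρ) (t ^ ρ), (t ^ ρ - x) ^ (α - 1) * u (x ^ ρ⁻¹) := by
  have hle : a ^ ρ ≤ t ^ ρ := rpow_le_rpow ha.le ht hρ.le
  have hpos : ∀ s ∈ Icc a t, 0 < s := fun s hs => ha.trans_le hs.1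
  have hsub := intervalIntegral.integral_comp_mul_deriv_of_deriv_nonneg (a := a) (b := t)
    (f := fun s => s ^ ρ) (f' := fun s => ρ * s ^ (ρ - 1))
    (g := fun x => (t ^ ρ - x) ^ (α - 1) * u (x ^ ρ⁻¹))
    (continuousOn_id.rpow_const fun _ _ => Or.inr hρ.le)
    (fun s hs => hasDerivAt_rpow_const (Or.inl ?_)) (fun s hs => ?_)
  · rw [← integral_Ioc_eq_integral_Ioo, ← intervalIntegral.integral_of_le hle, ← hsub,
      katugampolaIntegral, sub_eq_neg_add 1 α, rpow_add_one hρ.ne', mul_div_right_comm, mul_assoc,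
      ← intervalIntegral.integral_const_mul]
    congr 1
    refine intervalIntegral.integral_congr fun s hs => ?_
    rw [uIcc_of_le ht] at hs
    have hs0 := hpos s hs
    simp only [Function.comp_apply]
    rw [rpow_rpow_inv hs0.le hρ.ne', div_eq_mul_inv,
      ← rpow_neg (sub_nonneg.2 (rpow_le_rpow hs0.le hs.2 hρ.le)),
      show -(-α + 1) = α - 1 by ring]
    ring
  all_goals
    rw [min_eq_left ht, max_eq_right ht] at hs
    have hs0 := hpos s (Ioo_subset_Icc_self hs)
  · exact hs0.ne'
  · positivity

/-- Semigroup property of the Katugampola fractional integral. -/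
theorem katugampolaIntegral_semigroup (α β ρ a : ℝ) (hα : 0 < α) (hβ : 0 < β)
    (hρ : 0 < ρ) (ha : 0 < a) (u : ℝ → ℝ) (hu : ContinuousOn u (Set.Ici a))
    (t : ℝ) (ht : a ≤ t) :
    katugampolaIntegral α ρ a (katugampolaIntegral β ρ a u) t
      = katugampolaIntegral (α + β) ρ a u t := by
  have hv : ContinuousOn (fun x => u (x ^ ρ⁻¹)) (Icc (a ^ ρ) (t ^ ρ)) := by
    refine hu.comp (continuousOn_id.rpow_const fun _ _ => Or.inr (inv_pos.2 hρ).le) fun x hx => ?_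
    exact (le_rpow_inv_iff_of_pos ha.le ((rpow_pos_of_pos ha ρ).le.trans hx.1) hρ).2 hx.1
  have hinner : ∀ x ∈ Ioo (a ^ ρ) (t ^ ρ),
      (t ^ ρ - x) ^ (α - 1) * katugampolaIntegral β ρ a u (x ^ ρ⁻¹)
        = ρ ^ (-β) / Real.Gamma β * ((t ^ ρ - x) ^ (α - 1) *
          ∫ y in Ioo (a ^ ρ) x, (x - y) ^ (β - 1) * u (y ^ ρ⁻¹)) := by
    intro x hx
    have hx0 : 0 ≤ x := (rpow_pos_of_pos ha ρ).le.trans hx.1.le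
    rw [katugampolaIntegral_eq_riemannLiouville hρ ha
      ((le_rpow_inv_iff_of_pos ha.le hx0 hρ).2 hx.1.le), rpow_inv_rpow hx0 hρ.ne']
    ring
  rw [katugampolaIntegral_eq_riemannLiouville hρ ha ht,
    katugampolaIntegral_eq_riemannLiouville hρ ha ht,
    setIntegral_congr_fun measurableSet_Ioo hinner, integral_const_mul,
    riemannLiouville_semigroup hα hβ hv, ProbabilityTheory.beta, neg_add, rpow_add hρ]
  have := (Real.Gamma_pos_of_pos hα).ne'
  have := (Real.Gamma_pos_of_pos hβ).ne'
  field_simp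
end

section
/- Let 0 < α < 1, ρ > 0, a > 0, λ ∈ ℂ, c ∈ ℂ, and let h be a continuous function on [a, ∞). If u is a continuous function on [a, ∞) satisfying the integral equation u(t) = c + λ · I_{a+}^{α,ρ} u(t) + I_{a+}^{α,ρ} h(t) for all t ≥ a, then u is given by the explicit formula u(t) = c · E_α(λ ((t^ρ - a^ρ)/ρ)^α) + ∫_a^t ((t^ρ - s^ρ)/ρ)^{α-1} E_{α,α}(λ ((t^ρ - s^ρ)/ρ)^α) s^{ρ-1} h(s) ds. -/
open Real Set MeasureTheory

/-- The Katugampola fractional integral of a complex-valued function: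
`I_{a+}^{α,ρ} u(t) = (ρ^{1-α}/Γ(α)) ∫_a^t s^{ρ-1} u(s) / (t^ρ - s^ρ)^{1-α} ds`. -/
noncomputable def katugampolaIntegralC (α ρ a : ℝ) (u : ℝ → ℂ) (t : ℝ) : ℂ :=
  ((ρ ^ (1 - α) / Real.Gamma α : ℝ) : ℂ) *
    ∫ s in a..t, ((s ^ (ρ - 1) : ℝ) : ℂ) * u s / (((t ^ ρ - s ^ ρ) ^ (1 - α) : ℝ) : ℂ)

/-- The two-parameter Mittag-Leffler function `E_{α,β}(z) = ∑_{k=0}^∞ z^k / Γ(kα + β)`. -/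
noncomputable def mittagLeffler (α β : ℝ) (z : ℂ) : ℂ :=
  ∑' k : ℕ, z ^ k / (Real.Gamma (k * α + β) : ℂ)

open Filter Topology

/-- The convolution of two functions cut off to `(0, X]`, evaluated at a point of `[0, X]`. -/
theorem convolution_indicator_Ioc (f g : ℝ → ℂ) {X x : ℝ} (hx0 : 0 ≤ x) (hx : x ≤ X) :
    convolution (indicator (Ioc 0 X) f) (indicator (Ioc 0 X) g)
      (ContinuousLinearMap.mul ℂ ℂ) volume x = ∫ s in (0 : ℝ)..x, f s * g (x - s) := by
  rw [convolution_def, intervalIntegral.integral_of_le hx0, integral_Ioc_eq_integral_Ioo,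
    ← integral_indicator measurableSet_Ioo]
  congr 1
  funext s
  rw [ContinuousLinearMap.mul_apply']
  by_cases hs : s ∈ Ioo 0 x
  · rw [indicator_of_mem hs, indicator_of_mem (show s ∈ Ioc 0 X from ⟨hs.1, hs.2.le.trans hx⟩),
      indicator_of_mem (show x - s ∈ Ioc 0 X from
        ⟨by linarith [hs.2], by linarith [hs.1]⟩)]
  · rw [indicator_of_notMem hs]
    by_cases h1 : s ∈ Ioc 0 X
    · have h2 : x - s ∉ Ioc 0 X := fun h2 => hs ⟨h1.1, by linarith [h2.1]⟩
      rw [indicator_of_notMem h2, mul_zero]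
    · rw [indicator_of_notMem h1, zero_mul]

/-- Associativity of the one-sided convolution on `[0, X]`. -/
theorem integral_integral_mul_comp_sub {k r w : ℝ → ℂ} {X : ℝ} (hX : 0 ≤ X)
    (hk : IntervalIntegrable k volume 0 X) (hr : IntervalIntegrable r volume 0 X)
    (hw : ContinuousOn w (Icc 0 X)) :
    ∫ y in (0 : ℝ)..X, (∫ s in (0 : ℝ)..y, k s * r (y - s)) * w (X - y) =
      ∫ y in (0 : ℝ)..X, k y * ∫ s in (0 : ℝ)..(X - y), r s * w (X - y - s) := by
  have hk' : Integrable (indicator (Ioc 0 X) k) :=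
    (integrable_indicator_iff measurableSet_Ioc).2
      ((intervalIntegrable_iff_integrableOn_Ioc_of_le hX).1 hk)
  have hr' : Integrable (indicator (Ioc 0 X) r) :=
    (integrable_indicator_iff measurableSet_Ioc).2
      ((intervalIntegrable_iff_integrableOn_Ioc_of_le hX).1 hr)
  have hw' : Integrable (indicator (Ioc 0 X) w) :=
    (integrable_indicator_iff measurableSet_Ioc).2
      (hw.integrableOn_Icc.mono_set Ioc_subset_Icc_self)
  obtain ⟨M, hM⟩ := isCompact_Icc.exists_bound_of_continuousOn hw
  have hM0 : 0 ≤ M := (norm_nonneg _).trans (hM 0 ⟨le_rfl, hX⟩)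
  have hM' : ∀ x, ‖indicator (Ioc 0 X) w x‖ ≤ M := fun x => by
    by_cases hx : x ∈ Ioc 0 X
    · rw [indicator_of_mem hx]; exact hM x (Ioc_subset_Icc_self hx)
    · rw [indicator_of_notMem hx, norm_zero]; exact hM0
  have key := convolution_assoc (μ := (volume : Measure ℝ)) (ν := (volume : Measure ℝ))
    (ContinuousLinearMap.mul ℂ ℂ) (ContinuousLinearMap.mul ℂ ℂ)
    (ContinuousLinearMap.mul ℂ ℂ) (ContinuousLinearMap.mul ℂ ℂ)
    (fun x y z => by simp [mul_assoc]) (x₀ := X)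
    hk'.aestronglyMeasurable hr'.aestronglyMeasurable hw'.aestronglyMeasurable
    (hk'.ae_convolution_exists _ hr') (hr'.norm.ae_convolution_exists _ hw'.norm) (by
      have hI := hr'.norm.integrable_convolution (ContinuousLinearMap.mul ℝ ℝ) hw'.norm
      refine hk'.norm.mul_bdd (c := ∫ t, ‖indicator (Ioc 0 X) r t‖ * M)
        (hI.comp_sub_left X).aestronglyMeasurable (Eventually.of_forall fun t => ?_)
      rw [convolution_def]
      refine norm_integral_le_of_norm_le (hr'.norm.mul_const M) (Eventually.of_forall fun s => ?_)
      rw [ContinuousLinearMap.mul_apply', norm_mul, norm_norm, norm_norm]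
      exact mul_le_mul_of_nonneg_left (hM' _) (norm_nonneg _))
  rw [convolution_def, convolution_def] at key
  rw [intervalIntegral.integral_of_le hX, intervalIntegral.integral_of_le hX,
    integral_Ioc_eq_integral_Ioo, ← integral_Ico_eq_integral_Ioo,
    ← integral_indicator measurableSet_Ico, ← integral_indicator measurableSet_Ioc]
  refine (integral_congr_ae (Eventually.of_forall fun y => ?_)).trans
    (key.trans (integral_congr_ae (Eventually.of_forall fun y => ?_)))
  · simp only [ContinuousLinearMap.mul_apply']
    by_cases hy : y ∈ Ico 0 X
    · rw [indicator_of_mem hy, convolution_indicator_Ioc _ _ hy.1 hy.2.le,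
        indicator_of_mem (show X - y ∈ Ioc 0 X from ⟨by linarith [hy.2], by linarith [hy.1]⟩)]
    · have h2 : X - y ∉ Ioc 0 X := fun h2 => hy ⟨by linarith [h2.2], by linarith [h2.1]⟩
      rw [indicator_of_notMem hy, indicator_of_notMem h2, mul_zero]
  · simp only [ContinuousLinearMap.mul_apply']
    by_cases hy : y ∈ Ioc 0 X
    · rw [indicator_of_mem hy, indicator_of_mem hy,
        convolution_indicator_Ioc _ _ (by linarith [hy.2]) (by linarith [hy.1])]
    · rw [indicator_of_notMem hy, indicator_of_notMem hy, zero_mul]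

theorem rpow_mul_exp_neg_le_Gamma {R s : ℝ} (hR : 0 ≤ R) (hs : 1 ≤ s) :
    R ^ (s - 1) * exp (-R) ≤ Real.Gamma s := by
  rw [Real.Gamma_eq_integral (by linarith), ← integral_exp_neg_Ioi, ← integral_const_mul]
  have hI := Real.GammaIntegral_convergent (s := s) (by linarith)
  calc ∫ x in Ioi R, R ^ (s - 1) * exp (-x)
      ≤ ∫ x in Ioi R, exp (-x) * x ^ (s - 1) := by
        refine setIntegral_mono_on ((integrableOn_exp_neg_Ioi R).const_mul _)
          (hI.mono_set (Ioi_subset_Ioi hR)) measurableSet_Ioi fun x hx => ?_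
        rw [mul_comm]
        exact mul_le_mul_of_nonneg_left
          (rpow_le_rpow hR (le_of_lt hx) (by linarith)) (exp_pos _).le
    _ ≤ ∫ x in Ioi (0 : ℝ), exp (-x) * x ^ (s - 1) := by
        refine setIntegral_mono_set hI ?_ (Ioi_subset_Ioi hR).eventuallyLE
        filter_upwards [ae_restrict_mem measurableSet_Ioi] with x hx
        exact mul_nonneg (exp_pos _).le (rpow_nonneg (le_of_lt hx) _)

theorem summable_pow_div_Gamma {α : ℝ} (hα : 0 < α) {β : ℝ} (hβ : 0 < β) {z : ℝ} (hz : 0 ≤ z) :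
    Summable fun k : ℕ => z ^ k / Real.Gamma (k * α + β) := by
  set R : ℝ := (2 * (z + 1)) ^ α⁻¹ with hR
  have hR0 : 0 < R := by positivity
  have hRα : R ^ α = 2 * (z + 1) := by
    rw [hR, ← rpow_mul (by positivity), inv_mul_cancel₀ hα.ne', rpow_one]
  have hG : ∀ k : ℕ, 0 < Real.Gamma (k * α + β) := fun k => Real.Gamma_pos_of_pos (by positivity)
  refine Summable.of_norm_bounded_eventually_nat
    (g := fun k : ℕ => (R ^ (β - 1) * exp (-R))⁻¹ * (1 / 2) ^ k)
    (summable_geometric_two.mul_left _) ?_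
  obtain ⟨N, hN⟩ := exists_nat_ge (1 / α)
  filter_upwards [eventually_ge_atTop N] with k hk
  have hk1 : 1 ≤ k * α + β := by
    have : 1 / α ≤ k := hN.trans (by exact_mod_cast hk)
    rw [div_le_iff₀ hα] at this
    linarith
  have h1 := rpow_mul_exp_neg_le_Gamma hR0.le hk1
  have h2 : R ^ (k * α + β - 1) = (2 * (z + 1)) ^ k * R ^ (β - 1) := by
    rw [← hRα, ← rpow_natCast (R ^ α), ← rpow_mul hR0.le, ← rpow_add hR0]
    ring_nf
  rw [Real.norm_of_nonneg (div_nonneg (pow_nonneg hz k) (hG k).le), div_le_iff₀ (hG k)]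
  have hC : 0 < R ^ (β - 1) * exp (-R) := by positivity
  calc z ^ k ≤ (z + 1) ^ k := pow_le_pow_left₀ hz (by linarith) k
    _ = (R ^ (β - 1) * exp (-R))⁻¹ * (1 / 2) ^ k * (R ^ (k * α + β - 1) * exp (-R)) := by
        rw [h2, mul_pow]
        have : (1 / 2 : ℝ) ^ k * 2 ^ k = 1 := by rw [← mul_pow]; norm_num
        calc (z + 1) ^ k = (z + 1) ^ k * ((1 / 2 : ℝ) ^ k * 2 ^ k) *
              ((R ^ (β - 1) * exp (-R))⁻¹ * (R ^ (β - 1) * exp (-R))) := by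
                rw [this, inv_mul_cancel₀ hC.ne']; ring
          _ = _ := by ring
    _ ≤ _ := by gcongr

theorem norm_pow_div_Gamma {α β : ℝ} (hα : 0 < α) (hβ : 0 < β) (z : ℂ) (k : ℕ) :
    ‖z ^ k / (Real.Gamma (k * α + β) : ℂ)‖ = ‖z‖ ^ k / Real.Gamma (k * α + β) := by
  rw [norm_div, norm_pow, Complex.norm_real,
    Real.norm_of_nonneg (Real.Gamma_pos_of_pos (by positivity)).le]

theorem summable_mittagLeffler {α β : ℝ} (hα : 0 < α) (hβ : 0 < β) (z : ℂ) :
    Summable fun k : ℕ => z ^ k / (Real.Gamma (k * α + β) : ℂ) :=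
  .of_norm <| by
    simpa only [norm_pow_div_Gamma hα hβ] using summable_pow_div_Gamma hα hβ (norm_nonneg z)

theorem continuous_mittagLeffler {α β : ℝ} (hα : 0 < α) (hβ : 0 < β) :
    Continuous (mittagLeffler α β) := by
  refine continuous_iff_continuousAt.2 fun z => ?_
  refine ContinuousOn.continuousAt (s := Metric.ball 0 (‖z‖ + 1)) ?_
    (Metric.isOpen_ball.mem_nhds (by simp))
  refine continuousOn_tsum (fun k => by fun_prop)
    (summable_pow_div_Gamma hα hβ (by positivity : 0 ≤ ‖z‖ + 1)) fun k x hx => ?_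
  rw [norm_pow_div_Gamma hα hβ]
  have : 0 < Real.Gamma (k * α + β) := Real.Gamma_pos_of_pos (by positivity)
  have hx' : ‖x‖ ≤ ‖z‖ + 1 := by simpa using (mem_ball_zero_iff.1 hx).le
  gcongr

/-- The recursion `E_{α,β}(z) = 1 / Γ(β) + z E_{α,α+β}(z)`. -/
theorem mittagLeffler_eq_add {α β : ℝ} (hα : 0 < α) (hβ : 0 < β) (z : ℂ) :
    mittagLeffler α β z = 1 / (Real.Gamma β : ℂ) + z * mittagLeffler α (α + β) z := by
  rw [mittagLeffler, (summable_mittagLeffler hα hβ z).tsum_eq_zero_add, mittagLeffler,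
    ← tsum_mul_left]
  congr 1
  · simp
  · refine tsum_congr fun k => ?_
    rw [show ((k + 1 : ℕ) : ℝ) * α + β = k * α + (α + β) by push_cast; ring, pow_succ']
    ring

/-- The Riemann-Liouville kernel `y^{β-1} / Γ(β)`. -/
noncomputable def rlKernel (β y : ℝ) : ℝ := y ^ (β - 1) / Real.Gamma β

/-- The Mittag-Leffler kernel `y^{α-1} E_{α,α}(lam y^α)`. -/
noncomputable def mlKernel (α : ℝ) (lam : ℂ) (y : ℝ) : ℂ :=
  ((y ^ (α - 1) : ℝ) : ℂ) * mittagLeffler α α (lam * ((y ^ α : ℝ) : ℂ))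

theorem rlKernel_one (y : ℝ) : rlKernel 1 y = 1 := by simp [rlKernel]

theorem rlKernel_nonneg {β y : ℝ} (hβ : 0 < β) (hy : 0 ≤ y) : 0 ≤ rlKernel β y :=
  div_nonneg (rpow_nonneg hy _) (Real.Gamma_pos_of_pos hβ).le

theorem rlKernel_pos {β y : ℝ} (hβ : 0 < β) (hy : 0 < y) : 0 < rlKernel β y :=
  div_pos (rpow_pos_of_pos hy _) (Real.Gamma_pos_of_pos hβ)

theorem intervalIntegrable_rlKernel {β : ℝ} (hβ : 0 < β) (x y : ℝ) :
    IntervalIntegrable (rlKernel β) volume x y :=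
  (intervalIntegral.intervalIntegrable_rpow' (by linarith)).div_const _

theorem intervalIntegrable_ofReal_rlKernel {β : ℝ} (hβ : 0 < β) (x y : ℝ) :
    IntervalIntegrable (fun s => (rlKernel β s : ℂ)) volume x y :=
  ⟨(intervalIntegrable_rlKernel hβ x y).1.ofReal, (intervalIntegrable_rlKernel hβ x y).2.ofReal⟩

theorem intervalIntegrable_mlKernel {α : ℝ} (hα : 0 < α) (lam : ℂ) (x y : ℝ) :
    IntervalIntegrable (mlKernel α lam) volume x y := by
  have h : IntervalIntegrable (fun s : ℝ => ((s ^ (α - 1) : ℝ) : ℂ)) volume x y := by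
    have h := intervalIntegral.intervalIntegrable_rpow' (a := x) (b := y)
      (show -1 < α - 1 by linarith)
    exact ⟨h.1.ofReal, h.2.ofReal⟩
  refine h.mul_continuousOn (Continuous.continuousOn ?_)
  exact (continuous_mittagLeffler hα hα).comp (continuous_const.mul
    (Complex.continuous_ofReal.comp (continuous_rpow_const hα.le)))

theorem integral_rlKernel_mul_rlKernel {α β y : ℝ} (hα : 0 < α) (hβ : 0 < β) (hy : 0 < y) :
    ∫ s in (0 : ℝ)..y, rlKernel α s * rlKernel β (y - s) = rlKernel (α + β) y := by
  have h1 := Complex.betaIntegral_scaled (α : ℂ) (β : ℂ) hy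
  have h2 := Complex.Gamma_mul_Gamma_eq_betaIntegral (s := α) (t := β) (by simpa) (by simpa)
  have hab : Complex.Gamma ((α : ℂ) + β) ≠ 0 :=
    Complex.Gamma_ne_zero_of_re_pos (by simpa using add_pos hα hβ)
  have ha : Complex.Gamma (α : ℂ) ≠ 0 := Complex.Gamma_ne_zero_of_re_pos (by simpa)
  have hb : Complex.Gamma (β : ℂ) ≠ 0 := Complex.Gamma_ne_zero_of_re_pos (by simpa)
  apply Complex.ofReal_injective
  rw [← intervalIntegral.integral_ofReal]
  calc ∫ s in (0 : ℝ)..y, ((rlKernel α s * rlKernel β (y - s) : ℝ) : ℂ)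
      = ∫ s in (0 : ℝ)..y, ((s : ℂ) ^ ((α : ℂ) - 1) * ((y : ℂ) - s) ^ ((β : ℂ) - 1)) /
          (Complex.Gamma α * Complex.Gamma β) := by
        refine intervalIntegral.integral_congr fun s hs => ?_
        rw [uIcc_of_le hy.le] at hs
        simp only [rlKernel]
        push_cast [Complex.ofReal_cpow hs.1, Complex.ofReal_cpow (sub_nonneg.2 hs.2),
          ← Complex.Gamma_ofReal]
        ring
    _ = (rlKernel (α + β) y : ℂ) := by
        rw [intervalIntegral.integral_div, h1, rlKernel]
        push_cast [Complex.ofReal_cpow hy.le, ← Complex.Gamma_ofReal]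
        field_simp
        rw [mul_assoc _ (Complex.Gamma _), h2]
        ring

theorem intervalIntegrable_rlKernel_mul_rlKernel {α β y : ℝ} (hα : 0 < α) (hβ : 0 < β)
    (hy : 0 < y) :
    IntervalIntegrable (fun s => rlKernel α s * rlKernel β (y - s)) volume 0 y := by
  by_contra h
  have := integral_rlKernel_mul_rlKernel hα hβ hy
  rw [intervalIntegral.integral_undef h] at this
  exact (rlKernel_pos (add_pos hα hβ) hy).ne this

theorem hasSum_pow_mul_rlKernel {α β y : ℝ} (hα : 0 < α) (hβ : 0 < β) (hy : 0 < y) (lam : ℂ) :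
    HasSum (fun k : ℕ => lam ^ k * (rlKernel (k * α + β) y : ℂ))
      (((y ^ (β - 1) : ℝ) : ℂ) * mittagLeffler α β (lam * ((y ^ α : ℝ) : ℂ))) := by
  refine ((summable_mittagLeffler hα hβ (lam * ((y ^ α : ℝ) : ℂ))).hasSum.mul_left
    (((y ^ (β - 1) : ℝ) : ℂ))).congr_fun fun k => ?_
  rw [rlKernel, show (k : ℝ) * α + β - 1 = α * k + (β - 1) by ring, rpow_add hy,
    rpow_mul hy.le, rpow_natCast]
  push_cast
  ring

theorem integral_mlKernel_mul_rlKernel {α β y : ℝ} (hα : 0 < α) (hβ : 0 < β) (hy : 0 < y)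
    (lam : ℂ) :
    ∫ s in (0 : ℝ)..y, mlKernel α lam s * (rlKernel β (y - s) : ℂ) =
      ((y ^ (α + β - 1) : ℝ) : ℂ) * mittagLeffler α (α + β) (lam * ((y ^ α : ℝ) : ℂ)) := by
  have hpos : ∀ k : ℕ, 0 < k * α + α := fun k => by positivity
  set F : ℕ → ℝ → ℂ := fun k s =>
    lam ^ k * ((rlKernel (k * α + α) s * rlKernel β (y - s) : ℝ) : ℂ) with hF
  have hsum := hasSum_integral_of_summable_integral_norm (μ := volume.restrict (Ioc 0 y)) (F := F)
    (fun k => by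
      have := intervalIntegrable_rlKernel_mul_rlKernel (hpos k) hβ hy
      rw [intervalIntegrable_iff_integrableOn_Ioc_of_le hy.le] at this
      exact this.ofReal.const_mul _)
    (by
      have h := (hasSum_pow_mul_rlKernel hα (add_pos hα hβ) hy (‖lam‖ : ℂ)).summable
      rw [← Complex.summable_ofReal]
      refine h.congr fun k => ?_
      have : ∫ s in Ioc 0 y, ‖F k s‖ =
          ‖lam‖ ^ k * ∫ s in (0 : ℝ)..y, rlKernel (k * α + α) s * rlKernel β (y - s) := by
        rw [intervalIntegral.integral_of_le hy.le, ← integral_const_mul]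
        refine setIntegral_congr_fun measurableSet_Ioc fun s hs => ?_
        simp only [hF]
        rw [norm_mul, norm_pow, Complex.norm_real, Real.norm_of_nonneg
          (mul_nonneg (rlKernel_nonneg (hpos k) hs.1.le)
            (rlKernel_nonneg hβ (sub_nonneg.2 hs.2)))]
      rw [this, integral_rlKernel_mul_rlKernel (hpos k) hβ hy, add_assoc]
      push_cast
      rfl)
  have h1 : ∀ k, ∫ s in Ioc 0 y, F k s = lam ^ k * (rlKernel (k * α + (α + β)) y : ℂ) := by
    intro k
    rw [← intervalIntegral.integral_of_le hy.le, hF]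
    simp only
    rw [intervalIntegral.integral_const_mul, intervalIntegral.integral_ofReal,
      integral_rlKernel_mul_rlKernel (hpos k) hβ hy, add_assoc]
  simp only [h1] at hsum
  rw [(hasSum_pow_mul_rlKernel hα (add_pos hα hβ) hy lam).unique hsum,
    intervalIntegral.integral_of_le hy.le]
  refine setIntegral_congr_fun measurableSet_Ioc fun s hs => ?_
  simp only [hF]
  rw [mlKernel, ← ((hasSum_pow_mul_rlKernel hα hα hs.1 lam).mul_right _).tsum_eq]
  refine tsum_congr fun k => ?_
  push_cast
  ring

/-- The resolvent identity relating the Mittag-Leffler and Riemann-Liouville kernels. -/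
theorem mul_integral_mlKernel_mul_rlKernel {α y : ℝ} (hα : 0 < α) (hy : 0 < y) (lam : ℂ) :
    lam * ∫ s in (0 : ℝ)..y, mlKernel α lam s * (rlKernel α (y - s) : ℂ) =
      mlKernel α lam y - (rlKernel α y : ℂ) := by
  rw [integral_mlKernel_mul_rlKernel hα hα hy, mlKernel, mittagLeffler_eq_add hα hα, rlKernel,
    show α + α - 1 = α - 1 + α by ring, rpow_add hy]
  push_cast
  ring

theorem one_add_mul_integral_mlKernel {α y : ℝ} (hα : 0 < α) (hy : 0 < y) (lam : ℂ) :
    1 + lam * ∫ s in (0 : ℝ)..y, mlKernel α lam s =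
      mittagLeffler α 1 (lam * ((y ^ α : ℝ) : ℂ)) := by
  have h := integral_mlKernel_mul_rlKernel hα one_pos hy lam
  simp only [rlKernel_one, Complex.ofReal_one, mul_one, add_sub_cancel_right] at h
  rw [h, mittagLeffler_eq_add hα one_pos, Real.Gamma_one]
  push_cast
  ring

/-- Solution of the Riemann-Liouville integral equation
`v = c + lam J^α v + J^α g` by the Mittag-Leffler resolvent. -/
theorem rlIntegralEquation_solution {α X : ℝ} (hα : 0 < α) (hX : 0 < X) (lam c : ℂ)
    {v g : ℝ → ℂ} (hv : ContinuousOn v (Icc 0 X)) (hg : ContinuousOn g (Icc 0 X))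
    (heq : ∀ y ∈ Icc 0 X, v y = c + lam * (∫ s in (0 : ℝ)..y, (rlKernel α s : ℂ) * v (y - s))
      + ∫ s in (0 : ℝ)..y, (rlKernel α s : ℂ) * g (y - s)) :
    v X = c * mittagLeffler α 1 (lam * ((X ^ α : ℝ) : ℂ))
      + ∫ s in (0 : ℝ)..X, mlKernel α lam s * g (X - s) := by
  have hr : ∀ y, IntervalIntegrable (fun s => (rlKernel α s : ℂ)) volume 0 y :=
    intervalIntegrable_ofReal_rlKernel hα 0
  have hk := intervalIntegrable_mlKernel hα lam 0 X
  have hrefl : ∀ {f : ℝ → ℂ}, ContinuousOn f (Icc 0 X) → ∀ y ∈ Icc 0 X,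
      ContinuousOn (fun s => f (y - s)) (uIcc 0 y) := fun {f} hf y hy => by
    refine hf.comp (by fun_prop) fun s hs => ?_
    rw [uIcc_of_le hy.1] at hs
    exact ⟨by linarith [hs.2], by linarith [hs.1, hy.2]⟩
  have hXX : X ∈ Icc 0 X := ⟨hX.le, le_rfl⟩
  set w : ℝ → ℂ := fun s => lam * v s + g s with hw
  have hwc : ContinuousOn w (Icc 0 X) := (continuousOn_const.mul hv).add hg
  have hvw : ∀ y ∈ Icc 0 X, v y = c + ∫ s in (0 : ℝ)..y, (rlKernel α s : ℂ) * w (y - s) := by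
    intro y hy
    rw [heq y hy, ← intervalIntegral.integral_const_mul, add_assoc,
      ← intervalIntegral.integral_add (((hr y).mul_continuousOn (hrefl hv y hy)).const_mul _)
        ((hr y).mul_continuousOn (hrefl hg y hy))]
    congr 2
    funext s
    simp only [hw]
    ring
  have hassoc := integral_integral_mul_comp_sub hX.le hk (hr X) hwc
  have h1 : ∫ y in (0 : ℝ)..X, mlKernel α lam y *
        ∫ s in (0 : ℝ)..(X - y), (rlKernel α s : ℂ) * w (X - y - s) =
      (∫ y in (0 : ℝ)..X, mlKernel α lam y * v (X - y)) -
        c * ∫ y in (0 : ℝ)..X, mlKernel α lam y := by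
    rw [← intervalIntegral.integral_const_mul,
      ← intervalIntegral.integral_sub (hk.mul_continuousOn (hrefl hv X hXX)) (hk.const_mul _)]
    refine intervalIntegral.integral_congr fun y hy => ?_
    rw [uIcc_of_le hX.le] at hy
    rw [hvw (X - y) ⟨by linarith [hy.2], by linarith [hy.1]⟩]
    ring
  have h2 : lam * ∫ y in (0 : ℝ)..X,
        (∫ s in (0 : ℝ)..y, mlKernel α lam s * (rlKernel α (y - s) : ℂ)) * w (X - y) =
      (∫ y in (0 : ℝ)..X, mlKernel α lam y * w (X - y)) -
        ∫ y in (0 : ℝ)..X, (rlKernel α y : ℂ) * w (X - y) := by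
    rw [← intervalIntegral.integral_const_mul,
      ← intervalIntegral.integral_sub (hk.mul_continuousOn (hrefl hwc X hXX))
        ((hr X).mul_continuousOn (hrefl hwc X hXX)),
      intervalIntegral.integral_of_le hX.le, intervalIntegral.integral_of_le hX.le]
    refine setIntegral_congr_fun measurableSet_Ioc fun y hy => ?_
    rw [← mul_assoc, mul_integral_mlKernel_mul_rlKernel hα hy.1]
    ring
  have h3 : ∫ y in (0 : ℝ)..X, mlKernel α lam y * w (X - y) =
      lam * (∫ y in (0 : ℝ)..X, mlKernel α lam y * v (X - y)) +
        ∫ y in (0 : ℝ)..X, mlKernel α lam y * g (X - y) := by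
    rw [← intervalIntegral.integral_const_mul,
      ← intervalIntegral.integral_add ((hk.mul_continuousOn (hrefl hv X hXX)).const_mul _)
        (hk.mul_continuousOn (hrefl hg X hXX))]
    congr 1
    funext s
    simp only [hw]
    ring
  rw [hassoc, h1, h3] at h2
  rw [← one_add_mul_integral_mlKernel hα hX, hvw X hXX]
  linear_combination h2

/-- The substitution `x = (s^ρ - a^ρ) / ρ`, together with the reflection `x ↦ X - x`. -/
theorem integral_rpow_mul_comp {ρ a t : ℝ} (hρ : 0 < ρ) (ha : 0 < a) (hat : a ≤ t) (F : ℝ → ℂ) :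
    ∫ s in a..t, ((s ^ (ρ - 1) : ℝ) : ℂ) * F ((t ^ ρ - s ^ ρ) / ρ) =
      ∫ x in (0 : ℝ)..((t ^ ρ - a ^ ρ) / ρ), F x := by
  have hder : ∀ s ∈ Ioo a t,
      HasDerivAt (fun s => (s ^ ρ - a ^ ρ) / ρ) (s ^ (ρ - 1)) s := fun s hs => by
    have h := ((Real.hasDerivAt_rpow_const (p := ρ)
      (Or.inl (ha.trans hs.1).ne')).sub_const (a ^ ρ)).div_const ρ
    rwa [mul_div_cancel_left₀ _ hρ.ne'] at h
  have h := intervalIntegral.integral_deriv_smul_comp_of_deriv_nonneg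
    (a := a) (b := t) (f := fun s => (s ^ ρ - a ^ ρ) / ρ) (f' := fun s => s ^ (ρ - 1))
    (g := fun x => F ((t ^ ρ - a ^ ρ) / ρ - x))
    (Continuous.continuousOn
      (((continuous_rpow_const hρ.le).sub continuous_const).div_const ρ))
    (by rw [min_eq_left hat, max_eq_right hat]; exact hder)
    (by
      rw [min_eq_left hat, max_eq_right hat]
      exact fun s hs => rpow_nonneg (ha.trans hs.1).le _)
  simp only [sub_self, zero_div, intervalIntegral.integral_comp_sub_left, sub_zero] at h
  rw [← h]
  congr 1
  funext s
  rw [Function.comp_apply, Complex.real_smul, ← sub_div, sub_sub_sub_cancel_right]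

/-- The point `s` with `(s^ρ - a^ρ) / ρ = x`. -/
noncomputable def invSubst (ρ a x : ℝ) : ℝ := (ρ * x + a ^ ρ) ^ ρ⁻¹

theorem invSubst_sub {ρ a t s : ℝ} (hρ : 0 < ρ) (hs : 0 ≤ s) :
    invSubst ρ a ((t ^ ρ - a ^ ρ) / ρ - (t ^ ρ - s ^ ρ) / ρ) = s := by
  rw [invSubst, show ρ * ((t ^ ρ - a ^ ρ) / ρ - (t ^ ρ - s ^ ρ) / ρ) + a ^ ρ = s ^ ρ by
    field_simp; ring, ← rpow_mul hs, mul_inv_cancel₀ hρ.ne', rpow_one]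

theorem le_invSubst {ρ a x : ℝ} (hρ : 0 < ρ) (ha : 0 < a) (hx : 0 ≤ x) : a ≤ invSubst ρ a x := by
  calc a = (a ^ ρ) ^ ρ⁻¹ := by rw [← rpow_mul ha.le, mul_inv_cancel₀ hρ.ne', rpow_one]
    _ ≤ _ := rpow_le_rpow (rpow_nonneg ha.le _) (by nlinarith) (inv_nonneg.2 hρ.le)

theorem subst_invSubst {ρ a x : ℝ} (hρ : 0 < ρ) (ha : 0 < a) (hx : 0 ≤ x) :
    (invSubst ρ a x ^ ρ - a ^ ρ) / ρ = x := by
  rw [invSubst, ← rpow_mul (by positivity), inv_mul_cancel₀ hρ.ne', rpow_one]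
  field_simp
  ring

theorem continuousOn_comp_invSubst {ρ a : ℝ} (hρ : 0 < ρ) (ha : 0 < a) {u : ℝ → ℂ}
    (hu : ContinuousOn u (Ici a)) : ContinuousOn (fun x => u (invSubst ρ a x)) (Ici 0) := by
  refine hu.comp (Continuous.continuousOn ?_) fun x hx => le_invSubst hρ ha hx
  exact (continuous_rpow_const (inv_nonneg.2 hρ.le)).comp (by fun_prop)

theorem katugampolaIntegralC_eq {α ρ a t : ℝ} (hρ : 0 < ρ) (ha : 0 < a) (hat : a ≤ t)
    (u : ℝ → ℂ) :
    katugampolaIntegralC α ρ a u t =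
      ∫ x in (0 : ℝ)..((t ^ ρ - a ^ ρ) / ρ),
        (rlKernel α x : ℂ) * u (invSubst ρ a ((t ^ ρ - a ^ ρ) / ρ - x)) := by
  rw [← integral_rpow_mul_comp hρ ha hat (fun x => (rlKernel α x : ℂ) *
    u (invSubst ρ a ((t ^ ρ - a ^ ρ) / ρ - x))), katugampolaIntegralC,
    ← intervalIntegral.integral_const_mul]
  refine intervalIntegral.integral_congr fun s hs => ?_
  rw [uIcc_of_le hat] at hs
  have hs0 : 0 < s := ha.trans_le hs.1
  have hst : 0 ≤ t ^ ρ - s ^ ρ := sub_nonneg.2 (rpow_le_rpow hs0.le hs.2 hρ.le)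
  rw [invSubst_sub hρ hs0.le, rlKernel, ← neg_sub 1 α, rpow_neg (div_nonneg hst hρ.le),
    div_rpow hst hρ.le]
  push_cast
  rw [inv_div]
  ring

/-- A continuous solution of the integral equation
`u(t) = c + λ I_{a+}^{α,ρ} u(t) + I_{a+}^{α,ρ} h(t)` is given by the explicit
Mittag-Leffler variation-of-constants formula. -/
theorem integralEquation_solution (α ρ a : ℝ) (hα0 : 0 < α) (hα1 : α < 1)
    (hρ : 0 < ρ) (ha : 0 < a) (lam c : ℂ) (h u : ℝ → ℂ)
    (hh : ContinuousOn h (Set.Ici a)) (hu : ContinuousOn u (Set.Ici a))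
    (heq : ∀ t ≥ a, u t = c + lam * katugampolaIntegralC α ρ a u t
      + katugampolaIntegralC α ρ a h t) :
    ∀ t ≥ a, u t = c * mittagLeffler α 1 (lam * ((((t ^ ρ - a ^ ρ) / ρ) ^ α : ℝ) : ℂ))
      + ∫ s in a..t, ((((t ^ ρ - s ^ ρ) / ρ) ^ (α - 1) : ℝ) : ℂ)
          * mittagLeffler α α (lam * ((((t ^ ρ - s ^ ρ) / ρ) ^ α : ℝ) : ℂ))
          * ((s ^ (ρ - 1) : ℝ) : ℂ) * h s := by
  intro t ht
  rcases eq_or_lt_of_le ht with rfl | hat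
  · have h := heq a le_rfl
    simp only [katugampolaIntegralC, intervalIntegral.integral_same, mul_zero, add_zero] at h
    rw [intervalIntegral.integral_same, sub_self, zero_div, zero_rpow hα0.ne',
      mittagLeffler_eq_add hα0 one_pos, h]
    simp
  have hX : 0 < (t ^ ρ - a ^ ρ) / ρ :=
    div_pos (sub_pos.2 (rpow_lt_rpow ha.le hat hρ)) hρ
  have key := rlIntegralEquation_solution hα0 hX lam c
    (v := fun x => u (invSubst ρ a x)) (g := fun x => h (invSubst ρ a x))
    ((continuousOn_comp_invSubst hρ ha hu).mono Icc_subset_Ici_self)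
    ((continuousOn_comp_invSubst hρ ha hh).mono Icc_subset_Ici_self) (fun y hy => by
      have hy' := le_invSubst hρ ha hy.1
      rw [heq _ hy', katugampolaIntegralC_eq hρ ha hy', katugampolaIntegralC_eq hρ ha hy',
        subst_invSubst hρ ha hy.1])
  have hinv : invSubst ρ a ((t ^ ρ - a ^ ρ) / ρ) = t := by
    simpa using invSubst_sub (a := a) (t := t) hρ (ha.trans hat).le
  simp only [hinv] at key
  rw [key, ← integral_rpow_mul_comp hρ ha hat.le (fun x => mlKernel α lam x *
    h (invSubst ρ a ((t ^ ρ - a ^ ρ) / ρ - x)))]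
  congr 1
  refine intervalIntegral.integral_congr fun s hs => ?_
  rw [uIcc_of_le hat.le] at hs
  rw [invSubst_sub hρ (ha.trans_le hs.1).le, mlKernel]
  ring
end

section
/- Let 0 < α < 1, ρ > 0, t₀ > 0, let λ be a complex number with απ/2 < |arg λ| ≤ π, let T > t₀, and let g : [t₀, T] → ℂ be continuous. Then lim_{t → ∞} ∫_{t₀}^{T} ((t^ρ - s^ρ)/ρ)^{α-1} E_{α,α}(λ ((t^ρ - s^ρ)/ρ)^α) s^{ρ-1} g(s) ds = 0. -/
open Real Set MeasureTheory Filter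

/-- The difference of the values of `F` at the points with real part `u` on the two edges of the
strip `|Im w| ≤ θ`. -/
noncomputable def stripJump (θ : ℝ) (F : ℂ → ℂ) (u : ℝ) : ℂ :=
  F (u + θ * Complex.I) - F (u + ((-θ : ℝ) : ℂ) * Complex.I)

/-- The integral of `F` along the boundary of the half-strip `a ≤ Re w`, `|Im w| ≤ θ`; this is a
Hankel contour in logarithmic coordinates. -/
noncomputable def hankelIntegral (θ a : ℝ) (F : ℂ → ℂ) : ℂ :=
  (∫ u in Ioi a, stripJump θ F u) + Complex.I * ∫ φ in -θ..θ, F (a + φ * Complex.I)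

theorem continuous_stripJump {θ : ℝ} {F : ℂ → ℂ} (hθ : 0 ≤ θ)
    (hF : ContinuousOn F {w | |w.im| ≤ θ}) : Continuous (stripJump θ F) := by
  have h (y : ℝ) (hy : |y| ≤ θ) : Continuous fun u : ℝ => F (u + y * Complex.I) := by
    refine hF.comp_continuous (by fun_prop) fun u => ?_
    simpa using hy
  exact (h θ (abs_of_nonneg hθ).le).sub (h (-θ) (by rw [abs_neg, abs_of_nonneg hθ]))

theorem intervalIntegral_stripJump {θ : ℝ} {F : ℂ → ℂ} (hθ : 0 ≤ θ)
    (hF : DifferentiableOn ℂ F {w | |w.im| ≤ θ}) (a b : ℝ) :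
    ∫ u in b..a, stripJump θ F u =
      Complex.I * (∫ φ in -θ..θ, F (a + φ * Complex.I))
        - Complex.I * ∫ φ in -θ..θ, F (b + φ * Complex.I) := by
  have h := Complex.integral_boundary_rect_eq_zero_of_differentiableOn F
    (b + ((-θ : ℝ) : ℂ) * Complex.I) (a + θ * Complex.I) (hF.mono fun w hw => by
      have h2 : w.im ∈ uIcc (-θ) θ := by simpa using hw.2
      rw [uIcc_of_le (by linarith)] at h2
      exact abs_le.2 h2)
  have hc (y : ℝ) (hy : |y| ≤ θ) : Continuous fun u : ℝ => F (u + y * Complex.I) := by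
    refine hF.continuousOn.comp_continuous (by fun_prop) fun u => ?_
    simpa using hy
  unfold stripJump
  rw [intervalIntegral.integral_sub
    ((hc θ (abs_of_nonneg hθ).le).intervalIntegrable _ _)
    ((hc (-θ) (by rw [abs_neg, abs_of_nonneg hθ])).intervalIntegrable _ _)]
  simp only [Complex.add_re, Complex.add_im, Complex.ofReal_re, Complex.ofReal_im,
    Complex.mul_re, Complex.mul_im, Complex.I_re, Complex.I_im, smul_eq_mul, mul_zero, mul_one,
    sub_zero, add_zero, zero_add] at h
  linear_combination -h

theorem hankelIntegral_eq_integral_stripJump {θ : ℝ} {F : ℂ → ℂ} (hθ : 0 ≤ θ)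
    (hF : DifferentiableOn ℂ F {w | |w.im| ≤ θ}) (hint : Integrable (stripJump θ F))
    (hlim : Tendsto (fun b : ℝ => ∫ φ in -θ..θ, F (b + φ * Complex.I)) atBot (nhds 0)) (a : ℝ) :
    hankelIntegral θ a F = ∫ u, stripJump θ F u := by
  have h1 : Tendsto (fun b => ∫ u in b..a, stripJump θ F u) atBot
      (nhds (∫ u in Iic a, stripJump θ F u)) :=
    intervalIntegral_tendsto_integral_Iic a hint.integrableOn tendsto_id
  have h2 := (hlim.const_mul Complex.I).const_sub
    (Complex.I * (∫ φ in -θ..θ, F (a + φ * Complex.I)))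
  simp only [← intervalIntegral_stripJump hθ hF, mul_zero, sub_zero] at h2
  rw [← intervalIntegral.integral_Iic_add_Ioi (b := a) hint.integrableOn hint.integrableOn,
    tendsto_nhds_unique h1 h2, hankelIntegral, add_comm]

theorem tendsto_mul_exp_add_mul_atTop_atBot {c : ℝ} (hc : c < 0) (m : ℝ) :
    Tendsto (fun u : ℝ => c * Real.exp u + m * u) atTop atBot := by
  have h : Tendsto (fun u : ℝ => Real.exp u * (c + m * (u * Real.exp (-u)))) atTop atBot := by
    refine Real.tendsto_exp_atTop.atTop_mul_neg hc ?_
    have := (Real.tendsto_pow_mul_exp_neg_atTop_nhds_zero 1).const_mul m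
    simpa using this.const_add c
  refine h.congr fun u => ?_
  rw [Real.exp_neg]
  field_simp

/-- Integrability of `exp (-c e^u + m u)` near `+∞`. -/
theorem integrableOn_exp_neg_mul_exp_add_Ioi {c : ℝ} (hc : 0 < c) (m a : ℝ) :
    IntegrableOn (fun u => Real.exp (-c * Real.exp u + m * u)) (Ioi a) := by
  refine integrable_of_isBigO_exp_neg (b := 1) one_pos (by fun_prop) ?_
  have h := tendsto_mul_exp_add_mul_atTop_atBot (neg_lt_zero.2 hc) (m + 1)
  refine Asymptotics.IsBigO.of_bound 1 ?_
  filter_upwards [h.eventually_le_atBot 0] with u hu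
  rw [Real.norm_eq_abs, Real.norm_eq_abs, Real.abs_exp, Real.abs_exp, one_mul, Real.exp_le_exp]
  linarith

theorem integrable_exp_neg_mul_exp_add {c m : ℝ} (hc : 0 < c) (hm : 0 < m) :
    Integrable (fun u => Real.exp (-c * Real.exp u + m * u)) := by
  rw [← integrableOn_univ, ← Iic_union_Ioi (a := (0 : ℝ))]
  refine IntegrableOn.union ?_ (integrableOn_exp_neg_mul_exp_add_Ioi hc m 0)
  refine (integrableOn_exp_mul_Iic hm 0).mono' (by fun_prop) (ae_of_all _ fun u => ?_)
  rw [Real.norm_eq_abs, Real.abs_exp, Real.exp_le_exp]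
  nlinarith [mul_pos hc (Real.exp_pos u)]

/-- The integrand of the Hankel integral in logarithmic coordinates. -/
noncomputable def hankelKernel (m : ℝ) (w : ℂ) : ℂ :=
  Complex.exp (Complex.exp w + m * w)

theorem differentiable_hankelKernel (m : ℝ) : Differentiable ℂ (hankelKernel m) := by
  unfold hankelKernel; fun_prop

theorem norm_hankelKernel (m u y : ℝ) :
    ‖hankelKernel m (u + y * Complex.I)‖ = Real.exp (Real.cos y * Real.exp u + m * u) := by
  simp [hankelKernel, Complex.norm_exp, Complex.exp_re, mul_comm]

theorem norm_stripJump_hankelKernel_le (θ m u : ℝ) :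
    ‖stripJump θ (hankelKernel m) u‖ ≤ 2 * Real.exp (Real.cos θ * Real.exp u + m * u) := by
  refine (norm_sub_le _ _).trans ?_
  rw [norm_hankelKernel, norm_hankelKernel, Real.cos_neg, two_mul]

theorem continuous_stripJump_hankelKernel (θ m : ℝ) :
    Continuous (stripJump θ (hankelKernel m)) := by
  unfold stripJump hankelKernel; fun_prop

theorem integrableOn_stripJump_hankelKernel_Ioi {θ : ℝ} (hθ : Real.cos θ < 0) (m a : ℝ) :
    IntegrableOn (stripJump θ (hankelKernel m)) (Ioi a) := by
  refine ((integrableOn_exp_neg_mul_exp_add_Ioi (neg_pos.2 hθ) m a).const_mul 2).mono'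
    (continuous_stripJump_hankelKernel θ m).aestronglyMeasurable (ae_of_all _ fun u => ?_)
  rw [neg_neg]
  exact norm_stripJump_hankelKernel_le θ m u

theorem integrable_stripJump_hankelKernel {θ m : ℝ} (hθ : Real.cos θ < 0) (hm : 0 < m) :
    Integrable (stripJump θ (hankelKernel m)) := by
  refine ((integrable_exp_neg_mul_exp_add (neg_pos.2 hθ) hm).const_mul 2).mono'
    (continuous_stripJump_hankelKernel θ m).aestronglyMeasurable (ae_of_all _ fun u => ?_)
  rw [neg_neg]
  exact norm_stripJump_hankelKernel_le θ m u

theorem tendsto_verticalIntegral_zero {θ : ℝ} {F : ℂ → ℂ} (hθ : 0 ≤ θ) {B : ℝ → ℝ}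
    {l : Filter ℝ} (hB : Tendsto B l (nhds 0))
    (hF : ∀ᶠ b : ℝ in l, ∀ φ : ℝ, |φ| ≤ θ → ‖F (b + φ * Complex.I)‖ ≤ B b) :
    Tendsto (fun b : ℝ => ∫ φ in -θ..θ, F (b + φ * Complex.I)) l (nhds 0) := by
  have h0 : Tendsto (fun b => B b * |θ - -θ|) l (nhds 0) := by
    simpa using hB.mul_const |θ - -θ|
  refine squeeze_zero_norm' ?_ h0
  filter_upwards [hF] with b hb
  refine intervalIntegral.norm_integral_le_of_norm_le_const fun φ hφ => hb φ ?_
  rw [uIoc_of_le (by linarith)] at hφ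
  exact abs_le.2 ⟨hφ.1.le, hφ.2⟩

theorem hankelIntegral_hankelKernel_eq_integral {θ m : ℝ} (hθ0 : 0 ≤ θ) (hθ : Real.cos θ < 0)
    (hm : 0 < m) (a : ℝ) :
    hankelIntegral θ a (hankelKernel m) = ∫ u, stripJump θ (hankelKernel m) u := by
  refine hankelIntegral_eq_integral_stripJump hθ0 (differentiable_hankelKernel m).differentiableOn
    (integrable_stripJump_hankelKernel hθ hm) ?_ a
  refine tendsto_verticalIntegral_zero hθ0 (B := fun b => Real.exp (Real.exp b + m * b)) ?_ ?_
  · exact Real.tendsto_exp_atBot.comp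
      (Real.tendsto_exp_atBot.add_atBot (tendsto_id.const_mul_atBot hm))
  · refine Eventually.of_forall fun b φ _ => ?_
    rw [norm_hankelKernel, Real.exp_le_exp]
    nlinarith [Real.cos_le_one φ, Real.exp_pos b]

theorem integral_stripJump_eq_zero {θ : ℝ} {F : ℂ → ℂ} (hθ : 0 ≤ θ)
    (hF : DifferentiableOn ℂ F {w | |w.im| ≤ θ}) (hint : Integrable (stripJump θ F))
    (hbot : Tendsto (fun b : ℝ => ∫ φ in -θ..θ, F (b + φ * Complex.I)) atBot (nhds 0))
    (htop : Tendsto (fun b : ℝ => ∫ φ in -θ..θ, F (b + φ * Complex.I)) atTop (nhds 0)) :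
    ∫ u, stripJump θ F u = 0 := by
  have h1 := (intervalIntegral_tendsto_integral_Ioi 0 hint.integrableOn tendsto_id).add_const
    (Complex.I * ∫ φ in -θ..θ, F ((0 : ℝ) + φ * Complex.I))
  simp only [id, intervalIntegral_stripJump hθ hF, sub_add_cancel] at h1
  rw [← hankelIntegral_eq_integral_stripJump hθ hF hint hbot 0, hankelIntegral]
  exact tendsto_nhds_unique h1 (by simpa using htop.const_mul Complex.I)

theorem integrable_hankelKernel_line {m y : ℝ} (hm : 0 < m) (hy : Real.cos y < 0) :
    Integrable fun u : ℝ => hankelKernel m (u + y * Complex.I) := by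
  refine (integrable_exp_neg_mul_exp_add (neg_pos.2 hy) hm).mono'
    (by unfold hankelKernel; fun_prop) (ae_of_all _ fun u => ?_)
  rw [neg_neg, norm_hankelKernel]

/-- The horizontal lines on which the Hankel kernel decays may be moved to height `π`. -/
theorem integral_hankelKernel_line_eq {m θ : ℝ} (hm : 0 < m) (h1 : Real.pi / 2 < θ)
    (h2 : θ < Real.pi) :
    ∫ u : ℝ, hankelKernel m (u + θ * Complex.I)
      = ∫ u : ℝ, hankelKernel m (u + Real.pi * Complex.I) := by
  have hcθ : Real.cos θ < 0 := Real.cos_neg_of_pi_div_two_lt_of_lt h1 (by linarith)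
  set η := (Real.pi - θ) / 2 with hη
  set F : ℂ → ℂ := fun w => hankelKernel m (w + (((Real.pi + θ) / 2 : ℝ) : ℂ) * Complex.I) with hF
  have hη0 : 0 ≤ η := by linarith
  have hpt (b φ : ℝ) : F (b + φ * Complex.I)
      = hankelKernel m (b + ((φ + (Real.pi + θ) / 2 : ℝ) : ℂ) * Complex.I) := by
    simp only [hF]; congr 1; push_cast; ring
  have hjump : stripJump η F = fun u : ℝ =>
      hankelKernel m (u + Real.pi * Complex.I) - hankelKernel m (u + θ * Complex.I) := by
    ext u
    rw [stripJump, hpt, hpt, show η + (Real.pi + θ) / 2 = Real.pi by rw [hη]; ring,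
      show -η + (Real.pi + θ) / 2 = θ by rw [hη]; ring]
  have hi1 := integrable_hankelKernel_line (y := Real.pi) hm (by simp)
  have hi2 := integrable_hankelKernel_line hm hcθ
  have hint : Integrable (stripJump η F) := by rw [hjump]; exact hi1.sub hi2
  have hbound (b φ : ℝ) (hφ : |φ| ≤ η) :
      ‖F (b + φ * Complex.I)‖ ≤ Real.exp (Real.cos θ * Real.exp b + m * b) := by
    obtain ⟨h3, h4⟩ := abs_le.1 hφ
    rw [hpt, norm_hankelKernel, Real.exp_le_exp]
    have : Real.cos (φ + (Real.pi + θ) / 2) ≤ Real.cos θ :=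
      Real.cos_le_cos_of_nonneg_of_le_pi (by linarith [Real.pi_pos]) (by linarith) (by linarith)
    nlinarith [Real.exp_pos b]
  have hbot : Tendsto (fun b => Real.exp (Real.cos θ * Real.exp b + m * b)) atBot (nhds 0) :=
    Real.tendsto_exp_atBot.comp ((Real.tendsto_exp_atBot.const_mul _).add_atBot
      (tendsto_id.const_mul_atBot hm))
  have htop : Tendsto (fun b => Real.exp (Real.cos θ * Real.exp b + m * b)) atTop (nhds 0) :=
    Real.tendsto_exp_atBot.comp (tendsto_mul_exp_add_mul_atTop_atBot hcθ m)
  have h := integral_stripJump_eq_zero (F := F) hη0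
    ((differentiable_hankelKernel m).comp (by fun_prop)).differentiableOn hint
    (tendsto_verticalIntegral_zero hη0 hbot (Eventually.of_forall hbound))
    (tendsto_verticalIntegral_zero hη0 htop (Eventually.of_forall hbound))
  rw [hjump, integral_sub hi1 hi2] at h
  exact (sub_eq_zero.1 h).symm

theorem Real.Gamma_eq_integral_exp {m : ℝ} (hm : 0 < m) :
    Real.Gamma m = ∫ u : ℝ, Real.exp (-Real.exp u + m * u) := by
  rw [Real.Gamma_eq_integral hm, ← Real.range_exp, ← image_univ,
    integral_image_eq_integral_abs_deriv_smul MeasurableSet.univ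
      (fun x _ => (Real.hasDerivAt_exp x).hasDerivWithinAt) Real.exp_injective.injOn,
    setIntegral_univ]
  congr 1 with u
  rw [Real.abs_exp, smul_eq_mul, ← Real.exp_mul, ← Real.exp_add, ← Real.exp_add]
  ring_nf

theorem integral_hankelKernel_line {m θ : ℝ} (hm : 0 < m) (h1 : Real.pi / 2 < θ)
    (h2 : θ < Real.pi) :
    ∫ u : ℝ, hankelKernel m (u + θ * Complex.I)
      = Complex.exp (m * Real.pi * Complex.I) * Real.Gamma m := by
  rw [integral_hankelKernel_line_eq hm h1 h2, Real.Gamma_eq_integral_exp hm,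
    ← integral_complex_ofReal, ← integral_const_mul]
  congr 1 with u
  rw [hankelKernel, Complex.exp_add (u : ℂ), Complex.exp_pi_mul_I, Complex.ofReal_exp,
    ← Complex.exp_add]
  push_cast
  ring_nf

theorem integral_stripJump_hankelKernel {m θ : ℝ} (hm : 0 < m) (h1 : Real.pi / 2 < θ)
    (h2 : θ < Real.pi) :
    ∫ u, stripJump θ (hankelKernel m) u
      = 2 * Complex.I * (Real.sin (m * Real.pi) * Real.Gamma m : ℝ) := by
  have hcθ : Real.cos θ < 0 := Real.cos_neg_of_pi_div_two_lt_of_lt h1 (by linarith)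
  have hconj (u : ℝ) : hankelKernel m (u + ((-θ : ℝ) : ℂ) * Complex.I)
      = (starRingEnd ℂ) (hankelKernel m (u + θ * Complex.I)) := by
    simp [hankelKernel, ← Complex.exp_conj]
  have hi := integrable_hankelKernel_line hm hcθ
  unfold stripJump
  rw [integral_sub hi (integrable_hankelKernel_line hm (by rwa [Real.cos_neg]))]
  simp_rw [hconj]
  rw [integral_conj, integral_hankelKernel_line hm h1 h2, Complex.sub_conj]
  rw [Complex.im_mul_ofReal, ← Complex.ofReal_mul, Complex.exp_ofReal_mul_I_im]
  push_cast
  ring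

/-- Hankel's formula for `1 / Γ(β)`, in logarithmic coordinates, for `β < 1`. -/
theorem hankelIntegral_hankelKernel_of_lt_one {θ β : ℝ} (h1 : Real.pi / 2 < θ)
    (h2 : θ < Real.pi) (hβ0 : 0 < β) (hβ1 : β < 1) (a : ℝ) :
    hankelIntegral θ a (hankelKernel (1 - β)) = 2 * Real.pi * Complex.I / Real.Gamma β := by
  have hcθ : Real.cos θ < 0 := Real.cos_neg_of_pi_div_two_lt_of_lt h1 (by linarith)
  rw [hankelIntegral_hankelKernel_eq_integral (by linarith [Real.pi_pos]) hcθ (by linarith),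
    integral_stripJump_hankelKernel (by linarith) h1 h2]
  have hG : Real.Gamma β ≠ 0 := (Real.Gamma_pos_of_pos hβ0).ne'
  have hs : Real.sin (Real.pi * β) ≠ 0 :=
    (Real.sin_pos_of_pos_of_lt_pi (by positivity) (by nlinarith [Real.pi_pos])).ne'
  have hrefl : Real.sin ((1 - β) * Real.pi) * Real.Gamma (1 - β) = Real.pi / Real.Gamma β := by
    have h := Real.Gamma_mul_Gamma_one_sub β
    rw [eq_div_iff hs] at h
    rw [show (1 - β) * Real.pi = Real.pi - Real.pi * β by ring, Real.sin_pi_sub,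
      eq_div_iff hG]
    linear_combination h
  rw [hrefl]
  push_cast
  ring

theorem hasDerivAt_hankelKernel (β : ℝ) (w : ℂ) :
    HasDerivAt (hankelKernel (-β)) (hankelKernel (1 - β) w - β * hankelKernel (-β) w) w := by
  have h := ((Complex.hasDerivAt_exp w).add
    ((hasDerivAt_id w).const_mul ((-β : ℝ) : ℂ))).cexp
  refine h.congr_deriv ?_
  have h1 : hankelKernel (1 - β) w = hankelKernel (-β) w * Complex.exp w := by
    rw [hankelKernel, hankelKernel, ← Complex.exp_add]
    push_cast
    ring_nf
  rw [h1, hankelKernel]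
  simp only [Pi.add_apply, id]
  push_cast
  ring

theorem hankelIntegral_hankelKernel_recurrence {θ : ℝ} (hθ : Real.cos θ < 0) (β a : ℝ) :
    hankelIntegral θ a (hankelKernel (1 - β))
      = β * hankelIntegral θ a (hankelKernel (1 - (β + 1))) := by
  have hderiv (y u : ℝ) : HasDerivAt (fun u : ℝ => hankelKernel (-β) (u + y * Complex.I))
      (hankelKernel (1 - β) (u + y * Complex.I)
        - β * hankelKernel (-β) (u + y * Complex.I)) u := by
    have hl : HasDerivAt (fun u : ℝ => (u : ℂ) + y * Complex.I) 1 u :=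
      (Complex.ofRealCLM.hasDerivAt (x := u)).add_const _
    have h := (hasDerivAt_hankelKernel β (u + y * Complex.I)).comp u hl
    rw [mul_one] at h
    exact h
  have hderiv' (φ : ℝ) : HasDerivAt (fun φ : ℝ => hankelKernel (-β) (a + φ * Complex.I))
      (Complex.I * (hankelKernel (1 - β) (a + φ * Complex.I)
        - β * hankelKernel (-β) (a + φ * Complex.I))) φ := by
    have hl : HasDerivAt (fun φ : ℝ => (a : ℂ) + φ * Complex.I) Complex.I φ := by
      simpa using ((Complex.ofRealCLM.hasDerivAt (x := φ)).mul_const Complex.I).const_add (a : ℂ)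
    have h := (hasDerivAt_hankelKernel β (a + φ * Complex.I)).comp φ hl
    rw [mul_comm] at h
    exact h
  have hI1 := integrableOn_stripJump_hankelKernel_Ioi hθ (1 - β) a
  have hI2 := integrableOn_stripJump_hankelKernel_Ioi hθ (-β) a
  have hV (m : ℝ) : IntervalIntegrable (fun φ : ℝ => hankelKernel m (a + φ * Complex.I))
      volume (-θ) θ :=
    Continuous.intervalIntegrable (by unfold hankelKernel; fun_prop) _ _
  have hlim : Tendsto (stripJump θ (hankelKernel (-β))) atTop (nhds 0) := by
    have h := (Real.tendsto_exp_atBot.comp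
      (tendsto_mul_exp_add_mul_atTop_atBot hθ (-β))).const_mul 2
    rw [mul_zero] at h
    exact squeeze_zero_norm (norm_stripJump_hankelKernel_le θ (-β)) h
  have hRay := integral_Ioi_of_hasDerivAt_of_tendsto (a := a)
    (continuous_stripJump_hankelKernel θ (-β)).continuousWithinAt
    (fun u _ => (hderiv θ u).sub (hderiv (-θ) u))
    ((hI1.sub (hI2.const_mul (β : ℂ))).congr (ae_of_all _ fun u => by
      simp only [stripJump, Pi.sub_apply]; ring)) hlim
  have hArc := intervalIntegral.integral_eq_sub_of_hasDerivAt (a := -θ) (b := θ)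
    (fun φ _ => hderiv' φ) (((hV (1 - β)).sub ((hV (-β)).const_mul (β : ℂ))).const_mul _)
  rw [intervalIntegral.integral_const_mul, intervalIntegral.integral_sub (hV _)
    ((hV _).const_mul _), intervalIntegral.integral_const_mul] at hArc
  have hRay' : (∫ u in Ioi a, stripJump θ (hankelKernel (1 - β)) u)
      - β * (∫ u in Ioi a, stripJump θ (hankelKernel (-β)) u)
        = 0 - stripJump θ (hankelKernel (-β)) a := by
    rw [← hRay, ← integral_const_mul, ← integral_sub hI1 (hI2.const_mul _)]
    congr 1 with u
    simp only [stripJump]; ring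
  rw [show 1 - (β + 1) = -β by ring, hankelIntegral, hankelIntegral]
  rw [stripJump] at hRay'
  linear_combination hRay' + hArc

theorem tendsto_hankelIntegral_hankelKernel {θ : ℝ} (hθ : Real.cos θ < 0) (m a : ℝ) :
    Tendsto (fun k => hankelIntegral θ a (hankelKernel k)) (nhds m)
      (nhds (hankelIntegral θ a (hankelKernel m))) := by
  have hcont (w : ℂ) : Continuous fun k : ℝ => hankelKernel k w := by
    unfold hankelKernel; fun_prop
  have hnear : ∀ᶠ k in nhds m, |k - m| < 1 := by
    have : Metric.ball m 1 ∈ nhds m := Metric.ball_mem_nhds m one_pos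
    exact this
  have hle {k u : ℝ} (hk : |k - m| < 1) : k * u ≤ m * u + |u| := by
    have h1 := (le_abs_self ((k - m) * u)).trans_eq (abs_mul _ _)
    nlinarith [abs_nonneg u]
  refine Tendsto.add ?_ (Tendsto.const_mul _ ?_)
  · refine tendsto_integral_filter_of_dominated_convergence
      (fun u => 2 * (Real.exp (Real.cos θ * Real.exp u + (m + 1) * u)
        + Real.exp (Real.cos θ * Real.exp u + (m - 1) * u)))
      (Eventually.of_forall fun k =>
        (continuous_stripJump_hankelKernel θ k).aestronglyMeasurable) ?_ ?_ ?_
    · filter_upwards [hnear] with k hk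
      refine ae_of_all _ fun u => (norm_stripJump_hankelKernel_le θ k u).trans ?_
      refine mul_le_mul_of_nonneg_left ?_ zero_le_two
      have h2 := hle (u := u) hk
      rcases abs_cases u with ⟨h3, -⟩ | ⟨h3, -⟩
      · refine le_add_of_le_of_nonneg (Real.exp_le_exp.2 ?_) (Real.exp_pos _).le
        linarith
      · refine le_add_of_nonneg_of_le (Real.exp_pos _).le (Real.exp_le_exp.2 ?_)
        linarith
    · have h (k : ℝ) := integrableOn_exp_neg_mul_exp_add_Ioi (neg_pos.2 hθ) k a
      simp only [neg_neg] at h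
      exact ((h (m + 1)).add (h (m - 1))).const_mul 2
    · exact ae_of_all _ fun u => ((hcont _).sub (hcont _)).tendsto m
  · refine intervalIntegral.tendsto_integral_filter_of_dominated_convergence
      (fun _ => Real.exp (Real.exp a + (m * a + |a|)))
      (Eventually.of_forall fun k => Continuous.aestronglyMeasurable
        (by unfold hankelKernel; fun_prop)) ?_ intervalIntegrable_const
      (ae_of_all _ fun φ _ => (hcont _).tendsto m)
    filter_upwards [hnear] with k hk
    refine ae_of_all _ fun φ _ => ?_
    rw [norm_hankelKernel, Real.exp_le_exp]
    nlinarith [Real.cos_le_one φ, Real.exp_pos a, hle (u := a) hk]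

/-- Hankel's formula for `1 / Γ(β)`, in logarithmic coordinates. -/
theorem hankelIntegral_hankelKernel {θ β : ℝ} (h1 : Real.pi / 2 < θ)
    (h2 : θ < Real.pi) (hβ : 0 < β) (a : ℝ) :
    hankelIntegral θ a (hankelKernel (1 - β)) = 2 * Real.pi * Complex.I / Real.Gamma β := by
  have hcθ : Real.cos θ < 0 := Real.cos_neg_of_pi_div_two_lt_of_lt h1 (by linarith)
  suffices h : ∀ n : ℕ, ∀ β : ℝ, 0 < β → β ≤ n + 1 → hankelIntegral θ a (hankelKernel (1 - β))
      = 2 * Real.pi * Complex.I / Real.Gamma β by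
    obtain ⟨n, hn⟩ := exists_nat_ge β
    exact h n β hβ (by linarith)
  intro n
  induction n with
  | zero =>
    intro β hβ hβ1
    rcases hβ1.lt_or_eq with hlt | rfl
    · exact hankelIntegral_hankelKernel_of_lt_one h1 h2 hβ (by simpa using hlt) a
    · simp only [CharP.cast_eq_zero, zero_add]
      have hL : Tendsto (fun β : ℝ => hankelIntegral θ a (hankelKernel (1 - β)))
          (nhdsWithin 1 (Iio 1)) (nhds (hankelIntegral θ a (hankelKernel (1 - 1)))) :=
        (tendsto_hankelIntegral_hankelKernel hcθ (1 - 1) a).comp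
          ((continuous_const.sub continuous_id).tendsto' 1 (1 - 1 : ℝ) rfl |>.mono_left
            nhdsWithin_le_nhds)
      have hΓ : ContinuousAt Real.Gamma 1 :=
        (Real.differentiableAt_Gamma fun m => by
          have := m.cast_nonneg (α := ℝ); linarith).continuousAt
      have hR : Tendsto (fun β : ℝ => 2 * Real.pi * Complex.I / (Real.Gamma β : ℂ))
          (nhdsWithin 1 (Iio 1)) (nhds (2 * Real.pi * Complex.I / (Real.Gamma 1 : ℂ))) := by
        refine Tendsto.mono_left (Tendsto.div tendsto_const_nhds
          ((Complex.continuous_ofReal.tendsto _).comp hΓ) (by simp)) nhdsWithin_le_nhds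
      refine tendsto_nhds_unique hL (hR.congr' ?_)
      filter_upwards [Ioo_mem_nhdsLT (zero_lt_one' ℝ)] with β hβ
      exact (hankelIntegral_hankelKernel_of_lt_one h1 h2 hβ.1 hβ.2 a).symm
  | succ n ih =>
    intro β hβ hβn
    rcases le_or_gt β 1 with h | h
    · exact ih β hβ (by linarith [n.cast_nonneg (α := ℝ)])
    · have hr := hankelIntegral_hankelKernel_recurrence hcθ (β - 1) a
      rw [ih (β - 1) (by linarith) (by push_cast at hβn; linarith), sub_add_cancel] at hr
      have hβ1 : ((β - 1 : ℝ) : ℂ) ≠ 0 := by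
        exact_mod_cast (sub_pos.2 h).ne'
      have hΓ : Real.Gamma β = (β - 1) * Real.Gamma (β - 1) := by
        simpa using Real.Gamma_add_one (sub_pos.2 h).ne'
      refine mul_left_cancel₀ hβ1 ?_
      rw [← hr, hΓ, Complex.ofReal_mul]
      field_simp

/-- The integrand, in logarithmic coordinates, of the Hankel-type representation of the
Mittag-Leffler function `E_{α,α}(μ)`. -/
noncomputable def resolventKernel (α : ℝ) (μ w : ℂ) : ℂ :=
  Complex.exp (Complex.exp w + w) / (Complex.exp (α * w) - μ)

theorem exp_mul_sub_ne_zero {α θ : ℝ} {μ w : ℂ} (hα0 : 0 < α) (hα1 : α < 1) (hθ : θ < Real.pi)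
    (hμ : α * θ < |Complex.arg μ|) (hw : |w.im| ≤ θ) : Complex.exp (α * w) - μ ≠ 0 := by
  intro h
  have him : (α * w : ℂ).im = α * w.im := by simp
  have habs : |α * w.im| ≤ α * θ := by
    rw [abs_mul, abs_of_pos hα0]
    exact mul_le_mul_of_nonneg_left hw hα0.le
  have hlt : |α * w.im| < Real.pi := by nlinarith [abs_nonneg w.im, Real.pi_pos]
  have hlog : Complex.log (Complex.exp (α * w)) = α * w :=
    Complex.log_exp (by rw [him]; exact (abs_lt.1 hlt).1) (by rw [him]; exact (abs_lt.1 hlt).2.le)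
  rw [← sub_eq_zero.1 h, ← Complex.log_im, hlog, him] at hμ
  linarith

theorem differentiableOn_resolventKernel {α θ : ℝ} {μ : ℂ} (hα0 : 0 < α) (hα1 : α < 1)
    (hθ : θ < Real.pi) (hμ : α * θ < |Complex.arg μ|) :
    DifferentiableOn ℂ (resolventKernel α μ) {w | |w.im| ≤ θ} := by
  refine DifferentiableOn.div (by fun_prop) (by fun_prop) fun w hw => ?_
  exact exp_mul_sub_ne_zero hα0 hα1 hθ hμ hw

theorem hasSum_resolventKernel {α : ℝ} {μ w : ℂ} (h : ‖μ‖ < Real.exp (α * w.re)) :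
    HasSum (fun k : ℕ => μ ^ k * hankelKernel (1 - (k * α + α)) w) (resolventKernel α μ w) := by
  have hnorm : ‖μ * Complex.exp (-(α * w))‖ < 1 := by
    rw [norm_mul, Complex.norm_exp, show (-(α * w) : ℂ).re = -(α * w.re) by simp, Real.exp_neg,
      ← div_eq_mul_inv, div_lt_one (Real.exp_pos _)]
    exact h
  have hne : Complex.exp (α * w) ≠ 0 := Complex.exp_ne_zero _
  have hne' : Complex.exp (α * w) - μ ≠ 0 := by
    intro h0
    rw [← sub_eq_zero.1 h0, ← Complex.exp_add, add_neg_cancel, Complex.exp_zero, norm_one]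
      at hnorm
    exact lt_irrefl _ hnorm
  have hs := (hasSum_geometric_of_norm_lt_one hnorm).mul_left
    (Complex.exp (Complex.exp w + w) * Complex.exp (-(α * w)))
  have hval : Complex.exp (Complex.exp w + w) * Complex.exp (-(α * w))
      * (1 - μ * Complex.exp (-(α * w)))⁻¹ = resolventKernel α μ w := by
    have : 1 - μ * Complex.exp (-(α * w)) = (Complex.exp (α * w) - μ) * Complex.exp (-(α * w)) := by
      rw [sub_mul, ← Complex.exp_add, add_neg_cancel, Complex.exp_zero]
    rw [this, resolventKernel]
    have := Complex.exp_ne_zero (-(α * w))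
    field_simp
  rw [hval] at hs
  refine hs.congr_fun fun k => ?_
  rw [mul_pow, ← Complex.exp_nat_mul, hankelKernel, mul_left_comm, ← Complex.exp_add,
    ← Complex.exp_add]
  push_cast
  ring_nf

theorem norm_pow_mul_hankelKernel_le {α a u : ℝ} {μ : ℂ} (hα : 0 < α)
    (ha : ‖μ‖ ≤ Real.exp (α * a) / 2) (hu : a ≤ u) (k : ℕ) (y : ℝ) :
    ‖μ ^ k * hankelKernel (1 - (k * α + α)) (u + y * Complex.I)‖
      ≤ (1 / 2) ^ k * Real.exp (Real.cos y * Real.exp u + (1 - α) * u) := by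
  have h1 : ‖μ‖ * Real.exp (-(α * u)) ≤ 1 / 2 := by
    have h2 : Real.exp (α * a) ≤ Real.exp (α * u) := Real.exp_le_exp.2 (by gcongr)
    rw [Real.exp_neg, ← div_eq_mul_inv, div_le_iff₀ (Real.exp_pos _)]
    linarith
  have h3 : Real.exp (Real.cos y * Real.exp u + (1 - (k * α + α)) * u)
      = Real.exp (-(α * u)) ^ k * Real.exp (Real.cos y * Real.exp u + (1 - α) * u) := by
    rw [← Real.exp_nat_mul, ← Real.exp_add]
    ring_nf
  rw [norm_mul, norm_pow, norm_hankelKernel, h3, ← mul_assoc, ← mul_pow]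
  gcongr

theorem hasSum_hankelIntegral_resolventKernel {α θ a : ℝ} {μ : ℂ} (hα : 0 < α)
    (hθ : Real.cos θ < 0) (ha : ‖μ‖ ≤ Real.exp (α * a) / 2) :
    HasSum (fun k : ℕ => μ ^ k * hankelIntegral θ a (hankelKernel (1 - (k * α + α))))
      (hankelIntegral θ a (resolventKernel α μ)) := by
  have hlt {u : ℝ} (hu : a ≤ u) (y : ℝ) : ‖μ‖ < Real.exp (α * (u + y * Complex.I : ℂ).re) := by
    have h2 : Real.exp (α * a) ≤ Real.exp (α * u) := Real.exp_le_exp.2 (by gcongr)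
    have h3 : (u + y * Complex.I : ℂ).re = u := by simp
    rw [h3]
    linarith [Real.exp_pos (α * a)]
  have hgeom (c : ℝ) : HasSum (fun k : ℕ => (1 / 2 : ℝ) ^ k * c) (2 * c) :=
    hasSum_geometric_two.mul_right c
  have hray : HasSum (fun k : ℕ => ∫ u in Ioi a,
      μ ^ k * stripJump θ (hankelKernel (1 - (k * α + α))) u)
      (∫ u in Ioi a, stripJump θ (resolventKernel α μ) u) := by
    refine hasSum_integral_of_dominated_convergence (fun k u => (1 / 2) ^ k *
        (2 * Real.exp (Real.cos θ * Real.exp u + (1 - α) * u)))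
      (fun k => (continuous_const.mul
        (continuous_stripJump_hankelKernel _ _)).aestronglyMeasurable)
      (fun k => (ae_restrict_iff' measurableSet_Ioi).2 (ae_of_all _ fun u hu => ?_))
      (ae_of_all _ fun u => (hgeom _).summable) ?_
      ((ae_restrict_iff' measurableSet_Ioi).2 (ae_of_all _ fun u hu => ?_))
    · rw [stripJump, mul_sub]
      refine (norm_sub_le _ _).trans ?_
      have h1 := norm_pow_mul_hankelKernel_le hα ha (mem_Ioi.1 hu).le k θ
      have h2 := norm_pow_mul_hankelKernel_le hα ha (mem_Ioi.1 hu).le k (-θ)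
      rw [Real.cos_neg] at h2
      linarith
    · simp_rw [fun u => (hgeom (2 * Real.exp (Real.cos θ * Real.exp u + (1 - α) * u))).tsum_eq]
      have h := integrableOn_exp_neg_mul_exp_add_Ioi (neg_pos.2 hθ) (1 - α) a
      simp only [neg_neg] at h
      exact (h.const_mul 2).const_mul 2
    · simp only [stripJump, mul_sub]
      exact (hasSum_resolventKernel (hlt (mem_Ioi.1 hu).le θ)).sub
        (hasSum_resolventKernel (hlt (mem_Ioi.1 hu).le (-θ)))
  have harc : HasSum (fun k : ℕ => ∫ φ in -θ..θ,
      μ ^ k * hankelKernel (1 - (k * α + α)) (a + φ * Complex.I))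
      (∫ φ in -θ..θ, resolventKernel α μ (a + φ * Complex.I)) := by
    refine intervalIntegral.hasSum_integral_of_dominated_convergence (fun k φ => (1 / 2) ^ k *
        Real.exp (Real.cos φ * Real.exp a + (1 - α) * a))
      (fun k => Continuous.aestronglyMeasurable (by unfold hankelKernel; fun_prop))
      (fun k => ae_of_all _ fun φ _ => norm_pow_mul_hankelKernel_le hα ha le_rfl k φ)
      (ae_of_all _ fun φ _ => (hgeom _).summable) ?_
      (ae_of_all _ fun φ _ => hasSum_resolventKernel (hlt le_rfl φ))
    simp_rw [fun φ => (hgeom (Real.exp (Real.cos φ * Real.exp a + (1 - α) * a))).tsum_eq]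
    exact Continuous.intervalIntegrable (by fun_prop) _ _
  refine (hray.add (harc.mul_left Complex.I)).congr_fun fun k => ?_
  rw [hankelIntegral, integral_const_mul, intervalIntegral.integral_const_mul]
  ring

theorem tendsto_verticalIntegral_resolventKernel {α θ : ℝ} {μ : ℂ} (hα : 0 < α) (hθ : 0 ≤ θ)
    (hμ : μ ≠ 0) :
    Tendsto (fun b : ℝ => ∫ φ in -θ..θ, resolventKernel α μ (b + φ * Complex.I)) atBot
      (nhds 0) := by
  have hμ' : 0 < ‖μ‖ := norm_pos_iff.2 hμ
  refine tendsto_verticalIntegral_zero hθ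
    (B := fun b => Real.exp (Real.exp b + b) / (‖μ‖ / 2)) ?_ ?_
  · simpa using (Real.tendsto_exp_atBot.comp
      (Real.tendsto_exp_atBot.add_atBot tendsto_id)).div_const (‖μ‖ / 2)
  · have h0 : Tendsto (fun b => Real.exp (α * b)) atBot (nhds 0) :=
      Real.tendsto_exp_atBot.comp (tendsto_id.const_mul_atBot hα)
    filter_upwards [h0.eventually_lt_const (half_pos hμ')] with b hb φ _
    have hnum : ‖Complex.exp (Complex.exp (b + φ * Complex.I) + (b + φ * Complex.I))‖
        ≤ Real.exp (Real.exp b + b) := by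
      have h := norm_hankelKernel 1 b φ
      rw [hankelKernel, Complex.ofReal_one, one_mul, one_mul] at h
      rw [h, Real.exp_le_exp]
      nlinarith [Real.cos_le_one φ, Real.exp_pos b]
    have hden : ‖μ‖ / 2 ≤ ‖Complex.exp (α * (b + φ * Complex.I)) - μ‖ := by
      have h := norm_sub_norm_le μ (Complex.exp (α * (b + φ * Complex.I)))
      rw [norm_sub_rev] at h
      have h2 : ‖Complex.exp (α * (b + φ * Complex.I))‖ = Real.exp (α * b) := by
        simp [Complex.norm_exp]
      linarith
    rw [resolventKernel, norm_div]
    gcongr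

theorem norm_stripJump_resolventKernel_le {α θ d : ℝ} {μ : ℂ} (hd : 0 < d)
    (h : ∀ y : ℝ, |y| = α * θ → ∀ r : ℝ, 0 ≤ r → d ≤ ‖r * Complex.exp (y * Complex.I) - μ‖)
    (hαθ : 0 ≤ α * θ) (u : ℝ) :
    ‖stripJump θ (resolventKernel α μ) u‖
      ≤ 2 / d * Real.exp (Real.cos θ * Real.exp u + 1 * u) := by
  have key (y : ℝ) (hy : |α * y| = α * θ) : ‖resolventKernel α μ (u + y * Complex.I)‖
      ≤ Real.exp (Real.cos y * Real.exp u + 1 * u) / d := by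
    have hnum := norm_hankelKernel 1 u y
    rw [hankelKernel, Complex.ofReal_one, one_mul] at hnum
    have hden := h (α * y) hy (Real.exp (α * u)) (Real.exp_pos _).le
    rw [Complex.ofReal_exp, ← Complex.exp_add] at hden
    rw [resolventKernel, norm_div, hnum]
    gcongr
    refine hden.trans_eq ?_
    congr 3
    push_cast
    ring
  have h1 := key θ (abs_of_nonneg hαθ)
  have h2 := key (-θ) (by rw [mul_neg, abs_neg, abs_of_nonneg hαθ])
  rw [Real.cos_neg] at h2
  refine (norm_sub_le _ _).trans ((add_le_add h1 h2).trans_eq ?_)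
  ring

/-- A ray and a number off that ray are at positive distance. -/
theorem exists_pos_le_norm_ray_sub {ψ : ℝ} {lam : ℂ} (h : |ψ| < |Complex.arg lam|) :
    ∃ d : ℝ, 0 < d ∧ ∀ r : ℝ, 0 ≤ r → d ≤ ‖r * Complex.exp (ψ * Complex.I) - lam‖ := by
  set ζ := lam * Complex.exp (-(ψ * Complex.I)) with hζ
  have hlam : lam = ζ * Complex.exp (ψ * Complex.I) := by
    rw [hζ, mul_assoc, ← Complex.exp_add, neg_add_cancel, Complex.exp_zero, mul_one]
  have hnorm (r : ℝ) : ‖r * Complex.exp (ψ * Complex.I) - lam‖ = ‖(r : ℂ) - ζ‖ := by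
    rw [hlam, ← sub_mul, norm_mul, Complex.norm_exp_ofReal_mul_I, mul_one]
  simp_rw [hnorm]
  by_cases him : ζ.im = 0
  · have hre : ζ.re < 0 := by
      by_contra! hre
      have hζr : ζ = (ζ.re : ℂ) := Complex.ext (by simp) (by simpa using him)
      rcases hre.eq_or_lt with h0 | h0
      · rw [hlam, hζr, ← h0] at h
        simp at h
        linarith [abs_nonneg ψ]
      · have hψ := abs_lt.1 (h.trans_le (Complex.abs_arg_le_pi lam))
        rw [hlam, hζr, Complex.arg_real_mul _ h0, ← Complex.log_im, Complex.log_exp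
          (by simpa using hψ.1) (by simpa using hψ.2.le)] at h
        simp at h
    refine ⟨-ζ.re, by linarith, fun r hr => ?_⟩
    have := (le_abs_self _).trans (Complex.abs_re_le_norm ((r : ℂ) - ζ))
    simp only [Complex.sub_re, Complex.ofReal_re] at this
    linarith
  · refine ⟨|ζ.im|, abs_pos.2 him, fun r _ => ?_⟩
    simpa using Complex.abs_im_le_norm ((r : ℂ) - ζ)

theorem two_pi_I_mul_mittagLeffler {α θ : ℝ} {μ : ℂ} (hα0 : 0 < α) (hα1 : α < 1)
    (h1 : Real.pi / 2 < θ) (h2 : θ < Real.pi) (hμ : α * θ < |Complex.arg μ|)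
    (hint : Integrable (stripJump θ (resolventKernel α μ))) :
    2 * Real.pi * Complex.I * mittagLeffler α α μ = ∫ u, stripJump θ (resolventKernel α μ) u := by
  have hθ : 0 ≤ θ := by linarith [Real.pi_pos]
  have hcθ : Real.cos θ < 0 := Real.cos_neg_of_pi_div_two_lt_of_lt h1 (by linarith)
  have hμ0 : μ ≠ 0 := by
    rintro rfl
    rw [Complex.arg_zero, abs_zero] at hμ
    nlinarith
  obtain ⟨a, ha⟩ : ∃ a : ℝ, ‖μ‖ ≤ Real.exp (α * a) / 2 :=
    (((Real.tendsto_exp_atTop.comp (tendsto_id.const_mul_atTop hα0)).atTop_div_const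
      two_pos).eventually_ge_atTop ‖μ‖).exists
  rw [← hankelIntegral_eq_integral_stripJump hθ
    (differentiableOn_resolventKernel hα0 hα1 h2 hμ) hint
    (tendsto_verticalIntegral_resolventKernel hα0 hθ hμ0) a,
    ← (hasSum_hankelIntegral_resolventKernel hα0 hcθ ha).tsum_eq, mittagLeffler, ← tsum_mul_left]
  congr 1 with k
  rw [hankelIntegral_hankelKernel h1 h2 (by positivity)]
  ring

/-- The Mittag-Leffler function `E_{α,α}` decays like `1 / c` along `c * lam`, `c → ∞`, for every
`lam` in the sector `απ/2 < |arg lam|`. -/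
theorem exists_norm_mittagLeffler_le {α : ℝ} {lam : ℂ} (hα0 : 0 < α) (hα1 : α < 1)
    (harg : α * Real.pi / 2 < |Complex.arg lam|) :
    ∃ C : ℝ, 0 ≤ C ∧ ∀ c : ℝ, 0 < c → ‖mittagLeffler α α (lam * c)‖ ≤ C / c := by
  obtain ⟨θ, h1, hθ⟩ : ∃ θ, Real.pi / 2 < θ ∧ θ < min Real.pi (|Complex.arg lam| / α) :=
    exists_between (lt_min (by linarith [Real.pi_pos])
      ((lt_div_iff₀ hα0).2 (by linarith)))
  have h2 := hθ.trans_le (min_le_left _ _)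
  have h3 : α * θ < |Complex.arg lam| := by
    have := (lt_div_iff₀ hα0).1 (hθ.trans_le (min_le_right _ _))
    linarith
  have hαθ : 0 ≤ α * θ := by nlinarith [Real.pi_pos]
  have hcθ : Real.cos θ < 0 := Real.cos_neg_of_pi_div_two_lt_of_lt h1 (by linarith)
  obtain ⟨d₁, hd₁, hd₁'⟩ := exists_pos_le_norm_ray_sub (by rwa [abs_of_nonneg hαθ])
  obtain ⟨d₂, hd₂, hd₂'⟩ := exists_pos_le_norm_ray_sub (ψ := -(α * θ)) (lam := lam)
    (by rwa [abs_neg, abs_of_nonneg hαθ])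
  set d := min d₁ d₂
  have hd : 0 < d := lt_min hd₁ hd₂
  have hdist (y : ℝ) (hy : |y| = α * θ) (r : ℝ) (hr : 0 ≤ r) :
      d ≤ ‖r * Complex.exp (y * Complex.I) - lam‖ := by
    rcases (abs_eq hαθ).1 hy with rfl | rfl
    · exact (min_le_left _ _).trans (hd₁' r hr)
    · exact (min_le_right _ _).trans (hd₂' r hr)
  set K := ∫ u : ℝ, Real.exp (Real.cos θ * Real.exp u + 1 * u)
  have hK0 : 0 ≤ K := integral_nonneg fun u => (Real.exp_pos _).le
  have hKint : Integrable fun u : ℝ => Real.exp (Real.cos θ * Real.exp u + 1 * u) := by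
    simpa only [neg_neg] using integrable_exp_neg_mul_exp_add (neg_pos.2 hcθ) one_pos
  refine ⟨K / (Real.pi * d), by have := Real.pi_pos; positivity, fun c hc => ?_⟩
  have hargc : Complex.arg (lam * c) = Complex.arg lam := by
    rw [mul_comm, Complex.arg_real_mul _ hc]
  have hdistc (y : ℝ) (hy : |y| = α * θ) (r : ℝ) (hr : 0 ≤ r) :
      c * d ≤ ‖r * Complex.exp (y * Complex.I) - lam * c‖ := by
    have h := mul_le_mul_of_nonneg_left (hdist y hy (r / c) (by positivity)) hc.le
    rw [← Complex.norm_of_nonneg hc.le, ← norm_mul, Complex.norm_of_nonneg hc.le] at h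
    refine h.trans_eq (congrArg _ ?_)
    have : (c : ℂ) ≠ 0 := by exact_mod_cast hc.ne'
    push_cast
    field_simp
  have hle := norm_stripJump_resolventKernel_le (mul_pos hc hd) hdistc hαθ
  have hint : Integrable (stripJump θ (resolventKernel α (lam * c))) := by
    refine (hKint.const_mul _).mono' (Continuous.aestronglyMeasurable ?_) (ae_of_all _ hle)
    refine continuous_stripJump (by linarith [Real.pi_pos])
      (differentiableOn_resolventKernel hα0 hα1 h2 ?_).continuousOn
    rwa [hargc]
  have hrep := two_pi_I_mul_mittagLeffler hα0 hα1 h1 h2 (by rwa [hargc]) hint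
  have hnorm : 2 * Real.pi * ‖mittagLeffler α α (lam * c)‖ ≤ 2 / (c * d) * K := by
    have := norm_integral_le_of_norm_le (hKint.const_mul _) (ae_of_all volume hle)
    have hpi : ‖(2 * Real.pi * Complex.I : ℂ)‖ = 2 * Real.pi := by
      simp [abs_of_pos Real.pi_pos]
    rwa [← hrep, integral_const_mul, norm_mul, hpi] at this
  rw [div_div, le_div_iff₀ (by have := Real.pi_pos; positivity)]
  rw [div_mul_eq_mul_div, le_div_iff₀ (by positivity)] at hnorm
  linarith

/-- The Mittag-Leffler kernel `x ^ (α - 1) E_{α,α}(lam x ^ α)` is `O(1 / x)`. -/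
theorem exists_norm_mittagLeffler_kernel_le {α : ℝ} {lam : ℂ} (hα0 : 0 < α) (hα1 : α < 1)
    (harg : α * Real.pi / 2 < |Complex.arg lam|) :
    ∃ C : ℝ, 0 ≤ C ∧ ∀ x : ℝ, 0 < x →
      ‖((x ^ (α - 1) : ℝ) : ℂ) * mittagLeffler α α (lam * ((x ^ α : ℝ) : ℂ))‖ ≤ C / x := by
  obtain ⟨C, hC, h⟩ := exists_norm_mittagLeffler_le hα0 hα1 harg
  refine ⟨C, hC, fun x hx => ?_⟩
  have hxα := Real.rpow_pos_of_pos hx α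
  rw [norm_mul, Complex.norm_of_nonneg (Real.rpow_nonneg hx.le _), Real.rpow_sub_one hx.ne']
  refine (mul_le_mul_of_nonneg_left (h _ hxα) (by positivity)).trans_eq ?_
  field_simp

/-- The integral over a fixed compact interval `[t₀, T]` of the Mittag-Leffler kernel
against a continuous function tends to `0` as `t → ∞`. -/
theorem mittagLeffler_kernel_integral_tendsto_zero (α ρ t₀ T : ℝ)
    (hα0 : 0 < α) (hα1 : α < 1) (hρ : 0 < ρ) (ht₀ : 0 < t₀) (hT : t₀ < T) (lam : ℂ)
    (harg₁ : α * Real.pi / 2 < |Complex.arg lam|) (harg₂ : |Complex.arg lam| ≤ Real.pi)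
    (g : ℝ → ℂ) (hg : ContinuousOn g (Set.Icc t₀ T)) :
    Filter.Tendsto
      (fun t : ℝ => ∫ s in t₀..T,
        ((((t ^ ρ - s ^ ρ) / ρ) ^ (α - 1) : ℝ) : ℂ)
          * mittagLeffler α α (lam * ((((t ^ ρ - s ^ ρ) / ρ) ^ α : ℝ) : ℂ))
          * ((s ^ (ρ - 1) : ℝ) : ℂ) * g s)
      Filter.atTop (nhds 0) := by
  obtain ⟨C, hC, hker⟩ := exists_norm_mittagLeffler_kernel_le hα0 hα1 harg₁
  have hcont : ContinuousOn (fun s : ℝ => ((s ^ (ρ - 1) : ℝ) : ℂ) * g s) (Icc t₀ T) :=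
    (Complex.continuous_ofReal.comp_continuousOn (continuousOn_id.rpow_const fun s hs =>
      Or.inl (ht₀.trans_le hs.1).ne')).mul hg
  obtain ⟨M, hM⟩ := isCompact_Icc.exists_bound_of_continuousOn hcont
  have hlim : Tendsto (fun t : ℝ => C / ((t ^ ρ - T ^ ρ) / ρ) * M * |T - t₀|) atTop (nhds 0) := by
    have h1 : Tendsto (fun t : ℝ => (t ^ ρ - T ^ ρ) / ρ) atTop atTop :=
      (tendsto_atTop_add_const_right _ _ (tendsto_rpow_atTop hρ)).atTop_div_const hρ
    simpa using ((h1.const_div_atTop C).mul_const M).mul_const |T - t₀|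
  refine squeeze_zero_norm' ?_ hlim
  filter_upwards [eventually_gt_atTop T] with t ht
  refine intervalIntegral.norm_integral_le_of_norm_le_const fun s hs => ?_
  rw [uIoc_of_le hT.le] at hs
  have hs0 : 0 < s := ht₀.trans hs.1
  have hY : 0 < (t ^ ρ - T ^ ρ) / ρ :=
    div_pos (sub_pos.2 (Real.rpow_lt_rpow (ht₀.trans hT).le ht hρ)) hρ
  have hle : (t ^ ρ - T ^ ρ) / ρ ≤ (t ^ ρ - s ^ ρ) / ρ := by
    have := Real.rpow_le_rpow hs0.le hs.2 hρ.le
    gcongr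
  rw [mul_assoc, norm_mul]
  refine mul_le_mul ((hker _ (hY.trans_le hle)).trans ?_) (hM s ⟨hs.1.le, hs.2⟩)
    (norm_nonneg _) (by positivity)
  gcongr
end
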